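/- (Theorem "becominggraphthm", graphical case E = ∅: interior smoothing estimates for graphs starting in a thin slab.) Let n ≥ 1. There exist constants C > 1 and σ₀ ∈ (0,1), depending only on n, and for every L ≥ 1 there exist Λ₀ > 1 and λ₀ ∈ (0,1) such that the following holds. Let λ ∈ (0,λ₀], ρ > 0, t₁ ∈ ℝ, set t₀ := t₁ + Λ₀λ²ρ², let t₂ > t₀, â ∈ ℝⁿ, ã ∈ ℝ, and let f : [t₁,t₂) × Bⁿ(â,2ρ) → ℝ be a graphical mean curvature flow with |f(t,x) − ã| < 2ρ for all (t,x). Suppose sup_{Bⁿ(â,2ρ)} |f(t₁,·) − ã| ≤ λ^{2n}ρ and sup_{Bⁿ(â,2ρ)} |Df(t₁,·)| ≤ L. Then for all t ∈ [t₀, t₀+σ₀ρ²) with t < t₂ and all x ∈ Bⁿ(â,ρ): |f(t,x) − ã| ≤ Cρ⁻¹(t−t₁), |Df(t,x)| ≤ C(ρ⁻²(t−t₁))^{1/4}, and |D²f(t,x)| ≤ C(t−t₁)^{−1/2}, where |D²f| denotes the Frobenius norm of the spatial Hessian. -/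

import Mathlib

open Metric Set MeasureTheory

/-- Partial derivative `∂ᵢ g (x)`. -/
noncomputable def pd {n : ℕ} (g : EuclideanSpace ℝ (Fin n) → ℝ) (x : EuclideanSpace ℝ (Fin n))
    (i : Fin n) : ℝ :=
  fderiv ℝ g x (EuclideanSpace.single i 1)

/-- Second partial derivative `∂ᵢ∂ⱼ g (x)`. -/
noncomputable def pd2 {n : ℕ} (g : EuclideanSpace ℝ (Fin n) → ℝ) (x : EuclideanSpace ℝ (Fin n))
    (i j : Fin n) : ℝ :=
  fderiv ℝ (fun y => pd g y j) x (EuclideanSpace.single i 1)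

/-- Squared Euclidean norm `|Dg(x)|²` of the spatial gradient. -/
noncomputable def gradNormSq {n : ℕ} (g : EuclideanSpace ℝ (Fin n) → ℝ)
    (x : EuclideanSpace ℝ (Fin n)) : ℝ :=
  ∑ i, (pd g x i) ^ 2

/-- Euclidean norm `|Dg(x)|` of the spatial gradient. -/
noncomputable def gradNorm {n : ℕ} (g : EuclideanSpace ℝ (Fin n) → ℝ)
    (x : EuclideanSpace ℝ (Fin n)) : ℝ :=
  Real.sqrt (gradNormSq g x)

/-- Frobenius norm `|D²g(x)|` of the spatial Hessian. -/
noncomputable def hessNorm {n : ℕ} (g : EuclideanSpace ℝ (Fin n) → ℝ)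
    (x : EuclideanSpace ℝ (Fin n)) : ℝ :=
  Real.sqrt (∑ i, ∑ j, (pd2 g x i j) ^ 2)

/-- Right-hand side of the graphical mean curvature flow equation:
`∑ᵢⱼ (δᵢⱼ − ∂ᵢg ∂ⱼg / (1+|Dg|²)) ∂ᵢ∂ⱼ g`. -/
noncomputable def mcfRHS {n : ℕ} (g : EuclideanSpace ℝ (Fin n) → ℝ)
    (x : EuclideanSpace ℝ (Fin n)) : ℝ :=
  ∑ i, ∑ j,
    ((if i = j then (1 : ℝ) else 0) - pd g x i * pd g x j / (1 + gradNormSq g x)) * pd2 g x i j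

/-- `f` is a (smooth) graphical mean curvature flow on `I × U`. -/
def IsGMCF {n : ℕ} (I : Set ℝ) (U : Set (EuclideanSpace ℝ (Fin n)))
    (f : ℝ → EuclideanSpace ℝ (Fin n) → ℝ) : Prop :=
  ContDiffOn ℝ (⊤ : ℕ∞) (fun p : ℝ × EuclideanSpace ℝ (Fin n) => f p.1 p.2) (I ×ˢ U) ∧
  ∀ t ∈ I, ∀ x ∈ U, deriv (fun s => f s x) t = mcfRHS (f t) x

/-- Squared norm `|A|²(g,x)` of the second fundamental form of the graph of `g`
at `(x, g(x))`. -/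
noncomputable def secondFF2 {n : ℕ} (g : EuclideanSpace ℝ (Fin n) → ℝ)
    (x : EuclideanSpace ℝ (Fin n)) : ℝ :=
  ∑ i, ∑ j, ∑ k, ∑ l,
    ((if i = k then (1 : ℝ) else 0) - pd g x i * pd g x k / (1 + gradNormSq g x)) *
      ((if j = l then (1 : ℝ) else 0) - pd g x j * pd g x l / (1 + gradNormSq g x)) *
      (pd2 g x i j / Real.sqrt (1 + gradNormSq g x)) *
      (pd2 g x k l / Real.sqrt (1 + gradNormSq g x))


/-! ### Directional derivatives on space-time -/

/-- Space-time. -/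
abbrev SpT (n : ℕ) := ℝ × EuclideanSpace ℝ (Fin n)

/-- Directional derivative. -/
noncomputable def dv {n : ℕ} (v : SpT n) (G : SpT n → ℝ) (p : SpT n) : ℝ := fderiv ℝ G p v

/-- Spatial unit vector. -/
noncomputable def ex {n : ℕ} (i : Fin n) : SpT n := (0, EuclideanSpace.single i 1)

/-- Time unit vector. -/
noncomputable def et {n : ℕ} : SpT n := (1, 0)

/-- Smoothness on a set. -/
def Sm {n : ℕ} (Ω : Set (SpT n)) (G : SpT n → ℝ) : Prop := ContDiffOn ℝ (⊤ : ℕ∞) G Ω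

section calculus

variable {n : ℕ} {Ω : Set (SpT n)} {G H : SpT n → ℝ} {p : SpT n}

theorem Sm.contDiffAt (hΩ : IsOpen Ω) (hG : Sm Ω G) (hp : p ∈ Ω) :
    ContDiffAt ℝ (⊤ : ℕ∞) G p :=
  ContDiffOn.contDiffAt hG (hΩ.mem_nhds hp)

theorem Sm.diff (hΩ : IsOpen Ω) (hG : Sm Ω G) (hp : p ∈ Ω) : DifferentiableAt ℝ G p :=
  (hG.contDiffAt hΩ hp).differentiableAt (by simp)

theorem Sm.dv (hΩ : IsOpen Ω) (hG : Sm Ω G) (v : SpT n) : Sm Ω (dv v G) := by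
  have h : ContDiffOn ℝ (⊤ : ℕ∞) (fderiv ℝ G) Ω :=
    ContDiffOn.fderiv_of_isOpen hG hΩ (by simp)
  exact h.clm_apply contDiffOn_const

theorem Sm.add (hG : Sm Ω G) (hH : Sm Ω H) : Sm Ω (fun q => G q + H q) := ContDiffOn.add hG hH

theorem Sm.sub (hG : Sm Ω G) (hH : Sm Ω H) : Sm Ω (fun q => G q - H q) := ContDiffOn.sub hG hH

theorem Sm.mul (hG : Sm Ω G) (hH : Sm Ω H) : Sm Ω (fun q => G q * H q) := ContDiffOn.mul hG hH

theorem Sm.const (c : ℝ) : Sm Ω (fun _ => c) := contDiffOn_const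

theorem Sm.sum {ι : Type} [Fintype ι] {F : ι → SpT n → ℝ} (hF : ∀ i, Sm Ω (F i)) :
    Sm Ω (fun q => ∑ i, F i q) :=
  ContDiffOn.sum (fun i _ => hF i)

theorem Sm.inv (hG : Sm Ω G) (h0 : ∀ q ∈ Ω, G q ≠ 0) : Sm Ω (fun q => (G q)⁻¹) :=
  ContDiffOn.inv hG h0

theorem dv_congr (hΩ : IsOpen Ω) (h : ∀ q ∈ Ω, G q = H q) (hp : p ∈ Ω) (v : SpT n) :
    dv v G p = dv v H p := by
  have : G =ᶠ[nhds p] H := by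
    filter_upwards [hΩ.mem_nhds hp] with q hq using h q hq
  simp only [dv, this.fderiv_eq]

theorem dv_add (hΩ : IsOpen Ω) (hG : Sm Ω G) (hH : Sm Ω H) (hp : p ∈ Ω) (v : SpT n) :
    dv v (fun q => G q + H q) p = dv v G p + dv v H p := by
  simp only [dv, fderiv_fun_add (hG.diff hΩ hp) (hH.diff hΩ hp)]
  rfl

theorem dv_sub (hΩ : IsOpen Ω) (hG : Sm Ω G) (hH : Sm Ω H) (hp : p ∈ Ω) (v : SpT n) :
    dv v (fun q => G q - H q) p = dv v G p - dv v H p := by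
  simp only [dv, fderiv_fun_sub (hG.diff hΩ hp) (hH.diff hΩ hp)]
  rfl

theorem dv_mul (hΩ : IsOpen Ω) (hG : Sm Ω G) (hH : Sm Ω H) (hp : p ∈ Ω) (v : SpT n) :
    dv v (fun q => G q * H q) p = dv v G p * H p + G p * dv v H p := by
  simp only [dv, fderiv_fun_mul (hG.diff hΩ hp) (hH.diff hΩ hp)]
  simp
  ring

theorem dv_const (c : ℝ) (v : SpT n) (p : SpT n) : dv v (fun _ => c) p = 0 := by
  simp [dv]

theorem dv_sum (hΩ : IsOpen Ω) {ι : Type} [Fintype ι] {F : ι → SpT n → ℝ} (hF : ∀ i, Sm Ω (F i))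
    (hp : p ∈ Ω) (v : SpT n) :
    dv v (fun q => ∑ i, F i q) p = ∑ i, dv v (F i) p := by
  simp only [dv]
  rw [fderiv_fun_sum (fun i _ => (hF i).diff hΩ hp)]
  simp

theorem dv_comm (hΩ : IsOpen Ω) (hG : Sm Ω G) (hp : p ∈ Ω) (v w : SpT n) :
    dv v (dv w G) p = dv w (dv v G) p := by
  have hs : IsSymmSndFDerivAt ℝ G p :=
    (hG.contDiffAt hΩ hp).isSymmSndFDerivAt (by simp; exact WithTop.coe_le_coe.2 (le_top : (2 : ℕ∞) ≤ ⊤))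
  have hd : DifferentiableAt ℝ (fderiv ℝ G) p :=
    ((hG.contDiffAt hΩ hp).fderiv_right (m := 1) (by norm_cast)).differentiableAt (by simp)
  have key : ∀ a b : SpT n, dv a (dv b G) p = fderiv ℝ (fderiv ℝ G) p a b := by
    intro a b
    change fderiv ℝ (fun q => fderiv ℝ G q b) p a = _
    rw [fderiv_clm_apply hd (differentiableAt_const b)]
    simp
  rw [key, key]
  exact hs v w

theorem dv2_add (hΩ : IsOpen Ω) (hG : Sm Ω G) (hH : Sm Ω H) (hp : p ∈ Ω) (v w : SpT n) :
    dv v (dv w (fun q => G q + H q)) p = dv v (dv w G) p + dv v (dv w H) p := by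
  rw [dv_congr hΩ (fun q hq => dv_add hΩ hG hH hq w) hp v,
    dv_add hΩ (hG.dv hΩ w) (hH.dv hΩ w) hp]

theorem dv2_mul (hΩ : IsOpen Ω) (hG : Sm Ω G) (hH : Sm Ω H) (hp : p ∈ Ω) (v w : SpT n) :
    dv v (dv w (fun q => G q * H q)) p = dv v (dv w G) p * H p + dv w G p * dv v H p
      + (dv v G p * dv w H p + G p * dv v (dv w H) p) := by
  rw [dv_congr hΩ (fun q hq => dv_mul hΩ hG hH hq w) hp v,
    dv_add hΩ ((hG.dv hΩ w).mul hH) (hG.mul (hH.dv hΩ w)) hp,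
    dv_mul hΩ (hG.dv hΩ w) hH hp, dv_mul hΩ hG (hH.dv hΩ w) hp]

theorem dv2_sum (hΩ : IsOpen Ω) {ι : Type} [Fintype ι] {F : ι → SpT n → ℝ}
    (hF : ∀ i, Sm Ω (F i)) (hp : p ∈ Ω) (v w : SpT n) :
    dv v (dv w (fun q => ∑ i, F i q)) p = ∑ i, dv v (dv w (F i)) p := by
  rw [dv_congr hΩ (fun q hq => dv_sum hΩ hF hq w) hp v,
    dv_sum hΩ (fun i => (hF i).dv hΩ w) hp]

end calculus

/-! ### Quadratic forms and the operator -/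

/-- Bilinear form. -/
def qf {n : ℕ} (a : Fin n → Fin n → ℝ) (ξ ζ : Fin n → ℝ) : ℝ :=
  ∑ i, ∑ j, a i j * (ξ i * ζ j)

/-- Spatial gradient. -/
noncomputable def gr {n : ℕ} (G : SpT n → ℝ) (p : SpT n) : Fin n → ℝ := fun i => dv (ex i) G p

/-- Parabolic operator. -/
noncomputable def Lop {n : ℕ} (a : Fin n → Fin n → ℝ) (G : SpT n → ℝ) (p : SpT n) : ℝ :=
  ∑ i, ∑ j, a i j * dv (ex i) (dv (ex j) G) p - dv et G p

section ops

variable {n : ℕ} {Ω : Set (SpT n)} {G H : SpT n → ℝ} {p : SpT n} {a : Fin n → Fin n → ℝ}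

theorem qf_symm (ha : ∀ i j, a i j = a j i) (ξ ζ : Fin n → ℝ) : qf a ξ ζ = qf a ζ ξ := by
  unfold qf
  rw [Finset.sum_comm]
  refine Finset.sum_congr rfl fun i _ => Finset.sum_congr rfl fun j _ => ?_
  rw [ha j i]; ring

theorem qf_add_left (ξ ξ' ζ : Fin n → ℝ) : qf a (ξ + ξ') ζ = qf a ξ ζ + qf a ξ' ζ := by
  simp only [qf, ← Finset.sum_add_distrib, Pi.add_apply]
  refine Finset.sum_congr rfl fun i _ => Finset.sum_congr rfl fun j _ => ?_
  ring

theorem qf_smul_left (c : ℝ) (ξ ζ : Fin n → ℝ) : qf a (c • ξ) ζ = c * qf a ξ ζ := by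
  simp only [qf, Finset.mul_sum, Pi.smul_apply, smul_eq_mul]
  refine Finset.sum_congr rfl fun i _ => Finset.sum_congr rfl fun j _ => ?_
  ring

theorem qf_add_right (ξ ζ ζ' : Fin n → ℝ) : qf a ξ (ζ + ζ') = qf a ξ ζ + qf a ξ ζ' := by
  simp only [qf, ← Finset.sum_add_distrib, Pi.add_apply]
  refine Finset.sum_congr rfl fun i _ => Finset.sum_congr rfl fun j _ => ?_
  ring

theorem qf_smul_right (c : ℝ) (ξ ζ : Fin n → ℝ) : qf a ξ (c • ζ) = c * qf a ξ ζ := by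
  simp only [qf, Finset.mul_sum, Pi.smul_apply, smul_eq_mul]
  refine Finset.sum_congr rfl fun i _ => Finset.sum_congr rfl fun j _ => ?_
  ring

theorem qf_zero_left (ζ : Fin n → ℝ) : qf a 0 ζ = 0 := by simp [qf]

theorem qf_zero_right (ζ : Fin n → ℝ) : qf a ζ 0 = 0 := by simp [qf]

theorem qf_sum_left {ι : Type} [Fintype ι] (ξ : ι → Fin n → ℝ) (ζ : Fin n → ℝ) :
    qf a (∑ k, ξ k) ζ = ∑ k, qf a (ξ k) ζ := by
  classical
  induction (Finset.univ : Finset ι) using Finset.induction_on with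
  | empty => simp [qf_zero_left]
  | insert k s hk ih => rw [Finset.sum_insert hk, Finset.sum_insert hk, qf_add_left, ih]

/-- Young type inequality. -/
theorem qf_young (ha : ∀ i j, a i j = a j i) (hp : ∀ ξ, 0 ≤ qf a ξ ξ) (α β : ℝ)
    (ξ ζ : Fin n → ℝ) :
    0 ≤ α ^ 2 * qf a ξ ξ + 2 * α * β * qf a ξ ζ + β ^ 2 * qf a ζ ζ := by
  have h := hp (α • ξ + β • ζ)
  rw [qf_add_left, qf_add_right, qf_add_right, qf_smul_left, qf_smul_left, qf_smul_left,
    qf_smul_left, qf_smul_right, qf_smul_right, qf_smul_right, qf_smul_right,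
    qf_symm ha ζ ξ] at h
  linarith

theorem Lop_add (hΩ : IsOpen Ω) (hG : Sm Ω G) (hH : Sm Ω H) (hp : p ∈ Ω) :
    Lop a (fun q => G q + H q) p = Lop a G p + Lop a H p := by
  unfold Lop
  rw [dv_add hΩ hG hH hp]
  simp only [dv2_add hΩ hG hH hp, mul_add, Finset.sum_add_distrib]
  ring

theorem Lop_const (c : ℝ) : Lop a (fun _ => c) p = 0 := by
  unfold Lop
  have : ∀ j, dv (ex j) (fun _ : SpT n => c) = fun _ => 0 := fun j => by
    ext q; exact dv_const c _ q
  simp [this, dv_const]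

theorem Lop_mul (hΩ : IsOpen Ω) (ha : ∀ i j, a i j = a j i) (hG : Sm Ω G) (hH : Sm Ω H)
    (hp : p ∈ Ω) :
    Lop a (fun q => G q * H q) p = G p * Lop a H p + H p * Lop a G p
      + 2 * qf a (gr G p) (gr H p) := by
  have hs : 2 * qf a (gr G p) (gr H p) = qf a (gr G p) (gr H p) + qf a (gr H p) (gr G p) := by
    rw [qf_symm ha (gr H p)]; ring
  rw [hs]
  unfold Lop qf gr
  rw [dv_mul hΩ hG hH hp]
  simp only [dv2_mul hΩ hG hH hp, mul_sub, Finset.mul_sum]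
  rw [show ∀ A B C D E F : ℝ, A - E + (B - F) + (C + D) = (A + B + C + D) - (F + E) by
    intros; ring]
  simp only [← Finset.sum_add_distrib]
  congr 1
  · refine Finset.sum_congr rfl fun i _ => Finset.sum_congr rfl fun j _ => ?_
    ring
  · ring

theorem Lop_sum (hΩ : IsOpen Ω) {ι : Type} [Fintype ι] {F : ι → SpT n → ℝ}
    (hF : ∀ i, Sm Ω (F i)) (hp : p ∈ Ω) :
    Lop a (fun q => ∑ k, F k q) p = ∑ k, Lop a (F k) p := by
  unfold Lop
  rw [dv_sum hΩ hF hp]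
  simp only [dv2_sum hΩ hF hp, Finset.mul_sum, Finset.sum_sub_distrib]
  congr 1
  simp_rw [Finset.sum_comm (t := (Finset.univ : Finset ι))]

theorem Lop_congr (hΩ : IsOpen Ω) (h : ∀ q ∈ Ω, G q = H q) (hp : p ∈ Ω) :
    Lop a G p = Lop a H p := by
  unfold Lop
  rw [dv_congr hΩ h hp]
  congr 1
  refine Finset.sum_congr rfl fun i _ => Finset.sum_congr rfl fun j _ => ?_
  rw [dv_congr hΩ (fun q hq => dv_congr hΩ h hq (ex j)) hp (ex i)]

theorem gr_add (hΩ : IsOpen Ω) (hG : Sm Ω G) (hH : Sm Ω H) (hp : p ∈ Ω) :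
    gr (fun q => G q + H q) p = gr G p + gr H p := by
  ext i; simp [gr, dv_add hΩ hG hH hp]

theorem gr_mul (hΩ : IsOpen Ω) (hG : Sm Ω G) (hH : Sm Ω H) (hp : p ∈ Ω) :
    gr (fun q => G q * H q) p = H p • gr G p + G p • gr H p := by
  ext i; simp [gr, dv_mul hΩ hG hH hp]; ring

theorem gr_const (c : ℝ) : gr (fun _ : SpT n => c) p = 0 := by
  ext i; simp [gr, dv_const]

theorem gr_sum (hΩ : IsOpen Ω) {ι : Type} [Fintype ι] {F : ι → SpT n → ℝ}
    (hF : ∀ i, Sm Ω (F i)) (hp : p ∈ Ω) :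
    gr (fun q => ∑ k, F k q) p = ∑ k, gr (F k) p := by
  ext i; simp [gr, dv_sum hΩ hF hp]

end ops

/-! ### The maximum principle -/

theorem second_deriv_nonpos {g : ℝ → ℝ} {g' : ℝ → ℝ} {c : ℝ} 
    (hg : ∀ᶠ r in nhds (0 : ℝ), HasDerivAt g (g' r) r) (hg' : HasDerivAt g' c 0)
    (hmax : IsLocalMax g 0) : c ≤ 0 := by
  by_contra hc
  push Not at hc
  have hde : deriv g =ᶠ[nhds 0] g' := by
    filter_upwards [hg] with r hr using hr.deriv
  have h0 : deriv g 0 = 0 := hmax.deriv_eq_zero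
  have hdd : deriv (deriv g) 0 = c := by
    rw [hde.deriv_eq]; exact hg'.deriv
  have hmin : IsLocalMin g 0 :=
    isLocalMin_of_deriv_deriv_pos (by rw [hdd]; exact hc) h0 hg.self_of_nhds.continuousAt
  have hconst : g =ᶠ[nhds 0] fun _ => g 0 := by
    filter_upwards [hmin, hmax] with r h1 h2 using le_antisymm h2 h1
  have h1 : deriv g =ᶠ[nhds 0] fun _ => 0 := by
    have := hconst.deriv
    filter_upwards [this] with r hr
    rw [hr]; simp
  have : deriv (deriv g) 0 = 0 := by rw [h1.deriv_eq]; simp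
  linarith

open scoped MatrixOrder Matrix.Norms.L2Operator in
theorem psd_factor {n : ℕ} {a : Fin n → Fin n → ℝ} (ha : ∀ i j, a i j = a j i)
    (hpos : ∀ ξ, 0 ≤ qf a ξ ξ) :
    ∃ b : Fin n → Fin n → ℝ, ∀ i j, a i j = ∑ k, b k i * b k j := by
  classical
  have h : (Matrix.of a).PosSemidef := by
    refine Matrix.PosSemidef.of_dotProduct_mulVec_nonneg ?_ ?_
    · ext i j; simp [Matrix.conjTranspose_apply, ha j i]
    · intro ξ
      have := hpos ξ
      simp only [dotProduct, Matrix.mulVec, Matrix.of_apply, Pi.star_apply, star_trivial,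
        Finset.mul_sum]
      unfold qf at this
      refine this.trans (le_of_eq ?_)
      refine Finset.sum_congr rfl fun i _ => Finset.sum_congr rfl fun j _ => ?_
      ring
  obtain ⟨B, hB⟩ := CStarAlgebra.nonneg_iff_eq_star_mul_self.mp h.nonneg
  refine ⟨fun k i => B k i, fun i j => ?_⟩
  have := congrFun (congrFun hB i) j
  simpa [Matrix.mul_apply, Matrix.star_apply] using this

theorem dv_line {n : ℕ} {Ω : Set (SpT n)} {Q : SpT n → ℝ} (hΩ : IsOpen Ω) (hQ : Sm Ω Q)
    {p v : SpT n} {r : ℝ} (hp : p + r • v ∈ Ω) :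
    HasDerivAt (fun r : ℝ => Q (p + r • v)) (dv v Q (p + r • v)) r := by
  have h1 : HasFDerivAt Q (fderiv ℝ Q (p + r • v)) (p + r • v) := (hQ.diff hΩ hp).hasFDerivAt
  have h2 : HasDerivAt (fun r : ℝ => p + r • v) v r := by
    have := ((hasDerivAt_id r).smul_const v).const_add p
    simpa using this
  exact h1.comp_hasDerivAt r h2

theorem dv_linear {n : ℕ} (Q : SpT n → ℝ) (c : Fin n → ℝ) :
    dv (∑ i, c i • ex i) Q = fun p => ∑ i, c i * dv (ex i) Q p := by
  ext p; simp [dv]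

theorem maxp {n : ℕ} {Ω : Set (SpT n)} {Q : SpT n → ℝ} (hΩ : IsOpen Ω) (hQ : Sm Ω Q)
    {s T R M : ℝ} {x₀ : EuclideanSpace ℝ (Fin n)} 
    (hsub : Set.Icc s T ×ˢ Metric.closedBall x₀ R ⊆ Ω)
    (hs : ∀ x ∈ Metric.closedBall x₀ R, Q (s, x) ≤ M)
    (hb : ∀ t ∈ Set.Icc s T, ∀ x, dist x x₀ = R → Q (t, x) ≤ M)
    (hbulk : ∀ p ∈ Ω, s < p.1 → p.1 ≤ T → dist p.2 x₀ < R → M < Q p → gr Q p = 0 →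
      (∀ a : Fin n → Fin n → ℝ, (∀ i j, a i j = a j i) → (∀ ξ, 0 ≤ qf a ξ ξ) → Lop a Q p ≤ 0) →
      False) :
    ∀ p ∈ Set.Icc s T ×ˢ Metric.closedBall x₀ R, Q p ≤ M := by
  intro p₀ hp₀
  by_contra hcon
  push Not at hcon
  set K := Set.Icc s T ×ˢ Metric.closedBall x₀ R with hK
  have hKc : IsCompact K := isCompact_Icc.prod (isCompact_closedBall _ _)
  have hcont : ContinuousOn Q K := (ContDiffOn.continuousOn hQ).mono hsub
  obtain ⟨p, hpK, hpmax⟩ := hKc.exists_isMaxOn ⟨p₀, hp₀⟩ hcont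
  have hMp : M < Q p := hcon.trans_le (hpmax hp₀)
  have hpΩ : p ∈ Ω := hsub hpK
  obtain ⟨⟨hp1, hp2⟩, hp3⟩ := hpK
  have h1 : s < p.1 := by
    rcases hp1.lt_or_eq with h | h
    · exact h
    · exfalso
      have := hs p.2 hp3
      rw [h] at this
      exact absurd hMp (not_lt.2 this)
  have h2 : dist p.2 x₀ < R := by
    rcases (Metric.mem_closedBall.1 hp3).lt_or_eq with h | h
    · exact h
    · exfalso
      exact absurd hMp (not_lt.2 (hb p.1 ⟨hp1, hp2⟩ p.2 h))
  have hspace : ∀ v : EuclideanSpace ℝ (Fin n),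
      IsLocalMax (fun r : ℝ => Q (p + r • ((0, v) : SpT n))) 0 := by
    intro v
    have hc : Continuous fun r : ℝ => p.2 + r • v := by fun_prop
    have : ∀ᶠ r in nhds (0 : ℝ), p.2 + r • v ∈ Metric.ball x₀ R := by
      apply hc.continuousAt.eventually_mem
      apply Metric.isOpen_ball.mem_nhds
      simpa using h2
    filter_upwards [this] with r hr
    have hm : p + r • ((0, v) : SpT n) ∈ K := by
      refine ⟨?_, ?_⟩
      · simpa using ⟨hp1, hp2⟩
      · simpa using Metric.ball_subset_closedBall hr
    simpa using hpmax hm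
  have hev : ∀ v : SpT n, ∀ᶠ r in nhds (0 : ℝ), p + r • v ∈ Ω := by
    intro v
    have hc : Continuous fun r : ℝ => p + r • v := by fun_prop
    apply hc.continuousAt.eventually_mem
    apply hΩ.mem_nhds
    simpa using hpΩ
  have hgrad : gr Q p = 0 := by
    ext i
    have h3 := dv_line hΩ hQ (p := p) (v := ex i) (r := 0) (by simpa using hpΩ)
    have := (hspace (EuclideanSpace.single i 1)).hasDerivAt_eq_zero h3
    simpa [gr] using this
  have hhess : ∀ v : EuclideanSpace ℝ (Fin n),
      dv ((0, v) : SpT n) (dv ((0, v) : SpT n) Q) p ≤ 0 := by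
    intro v
    have h3 := dv_line hΩ (hQ.dv hΩ (0, v)) (p := p) (v := (0, v)) (r := 0) (by simpa using hpΩ)
    have h4 := second_deriv_nonpos (g := fun r : ℝ => Q (p + r • ((0, v) : SpT n)))
      (g' := fun r : ℝ => dv (0, v) Q (p + r • ((0, v) : SpT n)))
      (by filter_upwards [hev (0, v)] with r hr using dv_line hΩ hQ hr) h3 (hspace v)
    simpa using h4
  have htime : 0 ≤ dv et Q p := by
    have h3 : IsLocalMaxOn Q K p := hpmax.localize
    have h4 := h3.hasFDerivWithinAt_nonpos (y := ((s - p.1, 0) : SpT n))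
      ((hQ.diff hΩ hpΩ).hasFDerivAt.hasFDerivWithinAt) (by
        apply mem_posTangentConeAt_of_segment_subset
        intro q hq
        rw [segment_eq_image'] at hq
        obtain ⟨θ, ⟨hθ0, hθ1⟩, rfl⟩ := hq
        refine ⟨⟨?_, ?_⟩, ?_⟩
        · simp; nlinarith
        · simp; nlinarith
        · simpa using hp3)
    have h5 : ((s - p.1, 0) : SpT n) = (s - p.1) • (et : SpT n) := by simp [et]
    rw [h5, map_smul, smul_eq_mul] at h4
    unfold dv
    nlinarith
  refine hbulk p hpΩ h1 hp2 h2 hMp hgrad ?_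
  intro a ha hpos
  obtain ⟨b, hbf⟩ := psd_factor ha hpos
  unfold Lop
  have key : ∑ i, ∑ j, a i j * dv (ex i) (dv (ex j) Q) p
      = ∑ k, dv (∑ i, b k i • ex i) (dv (∑ j, b k j • ex j) Q) p := by
    have : ∀ k, dv (∑ i, b k i • ex i) (dv (∑ j, b k j • ex j) Q) p
        = ∑ i, ∑ j, b k i * b k j * dv (ex i) (dv (ex j) Q) p := by
      intro k
      rw [dv_linear, dv_linear]
      refine Finset.sum_congr rfl fun i _ => ?_
      rw [dv_sum hΩ (fun j => (Sm.const (b k j)).mul (hQ.dv hΩ (ex j))) hpΩ, Finset.mul_sum]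
      refine Finset.sum_congr rfl fun j _ => ?_
      rw [dv_mul hΩ (Sm.const (b k j)) (hQ.dv hΩ (ex j)) hpΩ, dv_const]
      ring
    simp_rw [this, hbf, Finset.sum_mul]
    rw [Finset.sum_comm' (s := Finset.univ (α := Fin n)) (t := fun _ => Finset.univ)
      (t' := Finset.univ) (s' := fun _ => Finset.univ) (by simp)]
    conv_lhs => rw [Finset.sum_comm]
    conv_rhs => rw [Finset.sum_comm]
    refine Finset.sum_congr rfl fun i _ => ?_
    rw [Finset.sum_comm]
  have h6 : ∀ k, dv (∑ i, b k i • ex i) (dv (∑ j, b k j • ex j) Q) p ≤ 0 := by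
    intro k
    have : (∑ i, b k i • ex i : SpT n) = (0, ∑ i, b k i • EuclideanSpace.single i 1) := by
      simp only [ex]
      ext1
      · simp [Prod.fst_sum]
      · simp [Prod.snd_sum]
    rw [this]
    exact hhess _
  have h7 := Finset.sum_nonpos fun k (_ : k ∈ Finset.univ) => h6 k
  rw [key]
  linarith

/-! ### The equation and its structure -/

/-- Squared gradient. -/
noncomputable def wf {n : ℕ} (u : SpT n → ℝ) (p : SpT n) : ℝ :=
  ∑ i, dv (ex i) u p * dv (ex i) u p

/-- Inverse of `1 + |Du|²`. -/
noncomputable def rf {n : ℕ} (u : SpT n → ℝ) (p : SpT n) : ℝ := (1 + wf u p)⁻¹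

/-- Rank one part of the coefficients. -/
noncomputable def bf {n : ℕ} (u : SpT n → ℝ) (i j : Fin n) (p : SpT n) : ℝ :=
  dv (ex i) u p * dv (ex j) u p * rf u p

/-- Coefficients. -/
noncomputable def af {n : ℕ} (u : SpT n → ℝ) (p : SpT n) (i j : Fin n) : ℝ :=
  (if i = j then 1 else 0) - bf u i j p

/-- Squared Hessian norm. -/
noncomputable def Bf {n : ℕ} (u : SpT n → ℝ) (p : SpT n) : ℝ :=
  ∑ k, ∑ l, dv (ex k) (dv (ex l) u) p * dv (ex k) (dv (ex l) u) p

/-- Squared norm of third derivatives. -/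
noncomputable def Tf {n : ℕ} (u : SpT n → ℝ) (p : SpT n) : ℝ :=
  ∑ k, ∑ l, ∑ i, dv (ex i) (dv (ex k) (dv (ex l) u)) p ^ 2

/-- Solutions of graphical mean curvature flow on an open set of space-time. -/
structure Sol {n : ℕ} (Ω : Set (SpT n)) (u : SpT n → ℝ) : Prop where
  op : IsOpen Ω
  sm : Sm Ω u
  pde : ∀ p ∈ Ω, dv et u p = ∑ i, ∑ j, af u p i j * dv (ex i) (dv (ex j) u) p

theorem alg1 {n : ℕ} (U : Fin n → ℝ) (h : Fin n → Fin n → ℝ) (hsym : ∀ i j, h i j = h j i)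
    (r : ℝ) :
    ∑ k, 2 * U k * (∑ i, ∑ j, (h k i * U j * r + U i * h k j * r
      + U i * U j * (-(r * r) * (2 * ∑ m, U m * h k m))) * h i j)
    = r * (∑ k, (2 * ∑ i, U i * h k i) ^ 2 - r * (∑ k, U k * (2 * ∑ i, U i * h k i)) ^ 2) := by
  set m : Fin n → ℝ := fun k => ∑ i, U i * h k i with hm
  have hm' : ∀ k, ∑ i, U i * h k i = m k := fun k => rfl
  simp only [hm']
  have e1 : ∀ k, ∑ i, ∑ j, (h k i * U j * r) * h i j = r * ∑ i, h k i * m i := by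
    intro k
    simp only [hm, Finset.mul_sum]
    refine Finset.sum_congr rfl fun i _ => Finset.sum_congr rfl fun j _ => ?_
    ring
  have e2 : ∀ k, ∑ i, ∑ j, (U i * h k j * r) * h i j = r * ∑ i, h k i * m i := by
    intro k
    rw [Finset.sum_comm]
    simp only [hm, Finset.mul_sum]
    refine Finset.sum_congr rfl fun i _ => Finset.sum_congr rfl fun j _ => ?_
    rw [hsym j i]; ring
  have e3 : ∀ c, ∑ i, ∑ j, (U i * U j * c) * h i j = c * ∑ i, U i * m i := by
    intro c
    simp only [hm, Finset.mul_sum]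
    refine Finset.sum_congr rfl fun i _ => Finset.sum_congr rfl fun j _ => ?_
    ring
  have e4 : ∀ k, ∑ i, ∑ j, (h k i * U j * r + U i * h k j * r
      + U i * U j * (-(r * r) * (2 * m k))) * h i j
      = 2 * r * ∑ i, h k i * m i - 2 * (r * r) * m k * ∑ i, U i * m i := by
    intro k
    simp only [add_mul, Finset.sum_add_distrib, e1, e2, e3]
    ring
  simp only [e4]
  have e5 : ∑ k, U k * ∑ i, h k i * m i = ∑ i, m i ^ 2 := by
    simp only [Finset.mul_sum]
    rw [Finset.sum_comm]
    refine Finset.sum_congr rfl fun i _ => ?_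
    rw [sq]; nth_rewrite 2 [hm]
    simp only [Finset.sum_mul]
    refine Finset.sum_congr rfl fun k _ => ?_
    rw [hsym k i]; ring
  have e6 : ∑ k, (2 * m k) ^ 2 = 4 * ∑ k, m k ^ 2 := by
    rw [Finset.mul_sum]; refine Finset.sum_congr rfl fun k _ => ?_
    ring
  have e7 : ∑ k, U k * (2 * m k) = 2 * ∑ k, U k * m k := by
    rw [Finset.mul_sum]; refine Finset.sum_congr rfl fun k _ => ?_
    ring
  rw [e6, e7, ← e5]
  have e8 : ∀ k, 2 * U k * (2 * r * ∑ i, h k i * m i - 2 * (r * r) * m k * ∑ i, U i * m i)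
      = 4 * r * (U k * ∑ i, h k i * m i) - 4 * (r * r) * (∑ i, U i * m i) * (U k * m k) := by
    intro k; ring
  simp only [e8, Finset.sum_sub_distrib, ← Finset.mul_sum]
  ring

section struct

variable {n : ℕ} {Ω : Set (SpT n)} {u G : SpT n → ℝ} {p : SpT n}

theorem wf_nonneg : 0 ≤ wf u p := Finset.sum_nonneg fun _ _ => mul_self_nonneg _

theorem rf_pos : 0 < rf u p := inv_pos.2 (by have := wf_nonneg (u := u) (p := p); linarith)

theorem rf_mul : rf u p * (1 + wf u p) = 1 :=
  inv_mul_cancel₀ (by have := wf_nonneg (u := u) (p := p); linarith)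

theorem rf_le_one : rf u p ≤ 1 := by
  have := rf_mul (u := u) (p := p)
  have h1 := wf_nonneg (u := u) (p := p)
  have h2 := rf_pos (u := u) (p := p)
  nlinarith

theorem af_symm (i j : Fin n) : af u p i j = af u p j i := by
  unfold af bf
  simp only [eq_comm (a := i) (b := j)]
  ring

theorem qf_af (ξ ζ : Fin n → ℝ) : qf (af u p) ξ ζ
    = ∑ i, ξ i * ζ i - rf u p * ((∑ i, dv (ex i) u p * ξ i) * ∑ i, dv (ex i) u p * ζ i) := by
  unfold qf af bf
  simp only [sub_mul, Finset.sum_sub_distrib, ite_mul, one_mul, zero_mul, Finset.sum_ite_eq,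
    Finset.mem_univ, if_true]
  congr 1
  rw [Finset.sum_mul_sum, Finset.mul_sum]
  refine Finset.sum_congr rfl fun i _ => ?_
  rw [Finset.mul_sum]
  refine Finset.sum_congr rfl fun j _ => ?_
  ring

theorem qf_le (ξ : Fin n → ℝ) : qf (af u p) ξ ξ ≤ ∑ i, ξ i ^ 2 := by
  rw [qf_af]
  have h2 := rf_pos (u := u) (p := p)
  have : 0 ≤ rf u p * ((∑ i, dv (ex i) u p * ξ i) * ∑ i, dv (ex i) u p * ξ i) :=
    mul_nonneg h2.le (mul_self_nonneg _)
  simp only [← sq] at *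
  linarith

theorem le_qf (ξ : Fin n → ℝ) : rf u p * ∑ i, ξ i ^ 2 ≤ qf (af u p) ξ ξ := by
  rw [qf_af]
  have h2 := rf_pos (u := u) (p := p)
  have h3 := rf_mul (u := u) (p := p)
  have cs := Finset.sum_mul_sq_le_sq_mul_sq Finset.univ (fun i => dv (ex i) u p) ξ
  have hw : wf u p = ∑ i, dv (ex i) u p ^ 2 := by unfold wf; simp only [sq]
  rw [← hw] at cs
  simp only [← sq]
  have := mul_le_mul_of_nonneg_left cs h2.le
  have h4 : ∑ i, ξ i ^ 2 = (rf u p * (1 + wf u p)) * ∑ i, ξ i ^ 2 := by rw [h3]; ring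
  nlinarith

theorem qf_nonneg (ξ : Fin n → ℝ) : 0 ≤ qf (af u p) ξ ξ :=
  le_trans (mul_nonneg rf_pos.le (Finset.sum_nonneg fun _ _ => sq_nonneg _)) (le_qf ξ)

theorem trace_le : ∑ i, af u p i i ≤ n := by
  have : ∀ i, af u p i i ≤ 1 := by
    intro i
    unfold af bf
    have := mul_nonneg (mul_self_nonneg (dv (ex i) u p)) (rf_pos (u := u) (p := p)).le
    simp only [if_true]; linarith
  calc ∑ i, af u p i i ≤ ∑ _i : Fin n, (1 : ℝ) := Finset.sum_le_sum fun i _ => this i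
    _ = n := by simp

theorem trace_nonneg : 0 ≤ ∑ i, af u p i i := by
  refine Finset.sum_nonneg fun i _ => ?_
  have := qf_nonneg (u := u) (p := p) (Pi.single i 1)
  simpa [qf, Pi.single_apply] using this

theorem Bw_le : rf u p * Bf u p
    ≤ ∑ k, qf (af u p) (gr (dv (ex k) u) p) (gr (dv (ex k) u) p) := by
  unfold Bf
  rw [Finset.sum_comm, Finset.mul_sum]
  refine Finset.sum_le_sum fun k _ => ?_
  have := le_qf (u := u) (p := p) (gr (dv (ex k) u) p)
  simpa only [gr, sq] using this

theorem gu : qf (af u p) (gr u p) (gr u p) = rf u p * wf u p := by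
  rw [qf_af]
  have h := rf_mul (u := u) (p := p)
  have : ∑ i, gr u p i * gr u p i = wf u p := rfl
  have h' : ∑ i, dv (ex i) u p * gr u p i = wf u p := rfl
  rw [this, h']
  linear_combination (-wf u p) * h

theorem Sol.d1 (S : Sol Ω u) (i : Fin n) : Sm Ω (dv (ex i) u) := S.sm.dv S.op _
theorem Sol.d2 (S : Sol Ω u) (i j : Fin n) : Sm Ω (dv (ex i) (dv (ex j) u)) := (S.d1 j).dv S.op _
theorem Sol.d3 (S : Sol Ω u) (i j k : Fin n) : Sm Ω (dv (ex i) (dv (ex j) (dv (ex k) u))) := (S.d2 j k).dv S.op _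

theorem Sol.w (S : Sol Ω u) : Sm Ω (wf u) := Sm.sum fun i => (S.d1 i).mul (S.d1 i)

theorem Sol.W (S : Sol Ω u) : Sm Ω (fun q => 1 + wf u q) := (Sm.const 1).add S.w

theorem Sol.r (S : Sol Ω u) : Sm Ω (rf u) := S.W.inv fun q _ => by
  have := wf_nonneg (u := u) (p := q); linarith

theorem Sol.b (S : Sol Ω u) (i j : Fin n) : Sm Ω (bf u i j) := ((S.d1 i).mul (S.d1 j)).mul S.r

theorem Sol.a (S : Sol Ω u) (i j : Fin n) : Sm Ω (fun q => af u q i j) := (Sm.const _).sub (S.b i j)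

theorem Sol.B (S : Sol Ω u) : Sm Ω (Bf u) := Sm.sum fun k => Sm.sum fun l => (S.d2 k l).mul (S.d2 k l)

theorem Sol.dw (S : Sol Ω u) (hp : p ∈ Ω) (v : SpT n) :
    dv v (wf u) p = 2 * ∑ i, dv (ex i) u p * dv v (dv (ex i) u) p := by
  unfold wf
  rw [dv_sum S.op (fun i => (S.d1 i).mul (S.d1 i)) hp, Finset.mul_sum]
  refine Finset.sum_congr rfl fun i _ => ?_
  rw [dv_mul S.op (S.d1 i) (S.d1 i) hp]; ring

theorem Sol.dr_mul (S : Sol Ω u) (hp : p ∈ Ω) (v : SpT n) :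
    dv v (rf u) p * (1 + wf u p) + rf u p * dv v (wf u) p = 0 := by
  have h := dv_mul S.op S.r S.W hp v
  rw [dv_congr S.op (H := fun _ => 1) (fun q _ => rf_mul) hp, dv_const,
    dv_add S.op (Sm.const 1) S.w hp, dv_const] at h
  linarith

theorem Sol.dr (S : Sol Ω u) (hp : p ∈ Ω) (v : SpT n) :
    dv v (rf u) p = -(rf u p * rf u p) * dv v (wf u) p := by
  have h1 := S.dr_mul hp v
  have h2 := rf_mul (u := u) (p := p)
  have : dv v (rf u) p * (rf u p * (1 + wf u p)) + rf u p * rf u p * dv v (wf u) p = 0 := by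
    linear_combination rf u p * h1
  rw [h2] at this
  linarith

theorem Sol.db (S : Sol Ω u) (hp : p ∈ Ω) (v : SpT n) (i j : Fin n) :
    dv v (bf u i j) p = dv v (dv (ex i) u) p * dv (ex j) u p * rf u p
      + dv (ex i) u p * dv v (dv (ex j) u) p * rf u p
      + dv (ex i) u p * dv (ex j) u p * dv v (rf u) p := by
  change dv v (fun q => (dv (ex i) u q * dv (ex j) u q) * rf u q) p = _
  rw [dv_mul S.op ((S.d1 i).mul (S.d1 j)) S.r hp, dv_mul S.op (S.d1 i) (S.d1 j) hp]
  ring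

theorem Sol.Lu (S : Sol Ω u) (hp : p ∈ Ω) : Lop (af u p) u p = 0 := by
  unfold Lop; rw [S.pde p hp]; ring

/-- Commutator of the operator with a spatial derivative. -/
theorem Sol.Lcomm (S : Sol Ω u) (hG : Sm Ω G) (hp : p ∈ Ω) (k : Fin n) :
    Lop (af u p) (dv (ex k) G) p = dv (ex k) (fun q => Lop (af u q) G q) p
      + ∑ i, ∑ j, dv (ex k) (bf u i j) p * dv (ex i) (dv (ex j) G) p := by
  have h2 : ∀ i j, Sm Ω (dv (ex i) (dv (ex j) G)) := fun i j => (hG.dv S.op _).dv S.op _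
  have hS : Sm Ω (fun q => ∑ i, ∑ j, af u q i j * dv (ex i) (dv (ex j) G) q) :=
    Sm.sum fun i => Sm.sum fun j => (S.a i j).mul (h2 i j)
  unfold Lop
  rw [dv_sub S.op hS (hG.dv S.op _) hp, dv_comm S.op hG hp (ex k) et,
    dv_sum S.op (fun i => Sm.sum fun j => (S.a i j).mul (h2 i j)) hp]
  have e : ∀ i, dv (ex k) (fun q => ∑ j, af u q i j * dv (ex i) (dv (ex j) G) q) p
      = ∑ j, (af u p i j * dv (ex i) (dv (ex j) (dv (ex k) G)) p
        - dv (ex k) (bf u i j) p * dv (ex i) (dv (ex j) G) p) := by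
    intro i
    rw [dv_sum S.op (fun j => (S.a i j).mul (h2 i j)) hp]
    refine Finset.sum_congr rfl fun j _ => ?_
    rw [dv_mul S.op (S.a i j) (h2 i j) hp, dv_comm S.op (hG.dv S.op (ex j)) hp (ex k) (ex i),
      dv_congr S.op (fun q hq => dv_comm S.op hG hq (ex k) (ex j)) hp (ex i)]
    unfold af
    rw [dv_sub S.op (Sm.const _) (S.b i j) hp, dv_const]
    ring
  simp only [e, Finset.sum_sub_distrib]
  ring

theorem Sol.Lu1 (S : Sol Ω u) (hp : p ∈ Ω) (k : Fin n) :
    Lop (af u p) (dv (ex k) u) p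
      = ∑ i, ∑ j, dv (ex k) (bf u i j) p * dv (ex i) (dv (ex j) u) p := by
  rw [S.Lcomm S.sm hp k, dv_congr S.op (H := fun _ => 0) (fun q hq => S.Lu hq) hp, dv_const]
  ring

theorem Sol.Lu2 (S : Sol Ω u) (hp : p ∈ Ω) (k l : Fin n) :
    Lop (af u p) (dv (ex k) (dv (ex l) u)) p
      = ∑ i, ∑ j, (dv (ex k) (dv (ex l) (bf u i j)) p * dv (ex i) (dv (ex j) u) p
        + dv (ex l) (bf u i j) p * dv (ex k) (dv (ex i) (dv (ex j) u)) p
        + dv (ex k) (bf u i j) p * dv (ex i) (dv (ex j) (dv (ex l) u)) p) := by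
  rw [S.Lcomm (S.d1 l) hp k, dv_congr S.op (fun q hq => S.Lu1 hq l) hp,
    dv_sum S.op (fun i => Sm.sum fun j => ((S.b i j).dv S.op _).mul (S.d2 i j)) hp]
  have e : ∀ i, dv (ex k) (fun q => ∑ j, dv (ex l) (bf u i j) q * dv (ex i) (dv (ex j) u) q) p
      = ∑ j, (dv (ex k) (dv (ex l) (bf u i j)) p * dv (ex i) (dv (ex j) u) p
        + dv (ex l) (bf u i j) p * dv (ex k) (dv (ex i) (dv (ex j) u)) p) := by
    intro i
    rw [dv_sum S.op (fun j => ((S.b i j).dv S.op _).mul (S.d2 i j)) hp]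
    refine Finset.sum_congr rfl fun j _ => ?_
    rw [dv_mul S.op ((S.b i j).dv S.op _) (S.d2 i j) hp]
  simp only [e, Finset.sum_add_distrib]

theorem Sol.gw (S : Sol Ω u) (hp : p ∈ Ω) :
    gr (wf u) p = ∑ k, (2 * dv (ex k) u p) • gr (dv (ex k) u) p := by
  ext i
  simp only [gr, S.dw hp, Finset.sum_apply, Pi.smul_apply, smul_eq_mul, Finset.mul_sum]
  refine Finset.sum_congr rfl fun k _ => ?_
  ring

theorem Sol.Lw (S : Sol Ω u) (hp : p ∈ Ω) :
    Lop (af u p) (wf u) p = 2 * ∑ k, qf (af u p) (gr (dv (ex k) u) p) (gr (dv (ex k) u) p)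
      + rf u p * qf (af u p) (gr (wf u) p) (gr (wf u) p) := by
  have h1 : Lop (af u p) (wf u) p = ∑ k, (2 * dv (ex k) u p * Lop (af u p) (dv (ex k) u) p
      + 2 * qf (af u p) (gr (dv (ex k) u) p) (gr (dv (ex k) u) p)) := by
    change Lop (af u p) (fun q => ∑ i, dv (ex i) u q * dv (ex i) u q) p = _
    rw [Lop_sum S.op (fun i => (S.d1 i).mul (S.d1 i)) hp]
    refine Finset.sum_congr rfl fun k _ => ?_
    rw [Lop_mul S.op af_symm (S.d1 k) (S.d1 k) hp]
    ring
  rw [h1, Finset.sum_add_distrib, ← Finset.mul_sum, add_comm]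
  congr 1
  have h2 := alg1 (fun i => dv (ex i) u p) (fun i j => dv (ex i) (dv (ex j) u) p)
    (fun i j => dv_comm S.op S.sm hp _ _) (rf u p)
  simp only [S.Lu1 hp, S.db hp, S.dr hp, S.dw hp]
  rw [h2, qf_af]
  simp only [gr, S.dw hp, sq]

/-- Cauchy-Schwarz for the gradient of the squared gradient. -/
theorem Sol.gw_le (S : Sol Ω u) (hp : p ∈ Ω) :
    qf (af u p) (gr (wf u) p) (gr (wf u) p)
      ≤ 4 * wf u p * ∑ k, qf (af u p) (gr (dv (ex k) u) p) (gr (dv (ex k) u) p) := by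
  obtain ⟨b, hb⟩ := psd_factor (a := af u p) af_symm qf_nonneg
  have key : ∀ ξ, qf (af u p) ξ ξ = ∑ m, (∑ i, b m i * ξ i) ^ 2 := by
    intro ξ
    have : ∀ m, (∑ i, b m i * ξ i) * (∑ i, b m i * ξ i)
        = ∑ i, ∑ j, b m i * b m j * (ξ i * ξ j) := by
      intro m
      rw [Finset.sum_mul_sum]
      refine Finset.sum_congr rfl fun i _ => Finset.sum_congr rfl fun j _ => ?_
      ring
    unfold qf
    simp only [sq, this]
    simp only [hb, Finset.sum_mul]
    conv_rhs => rw [Finset.sum_comm]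
    refine Finset.sum_congr rfl fun i _ => ?_
    rw [Finset.sum_comm]
  simp only [key]
  rw [Finset.sum_comm, Finset.mul_sum]
  refine Finset.sum_le_sum fun m _ => ?_
  rw [S.gw hp]
  have e : ∑ i, b m i * (∑ k, (2 * dv (ex k) u p) • gr (dv (ex k) u) p) i
      = 2 * ∑ k, dv (ex k) u p * ∑ i, b m i * gr (dv (ex k) u) p i := by
    simp only [Finset.sum_apply, Pi.smul_apply, smul_eq_mul, Finset.mul_sum]
    rw [Finset.sum_comm]
    refine Finset.sum_congr rfl fun k _ => Finset.sum_congr rfl fun i _ => ?_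
    ring
  rw [e]
  have cs := Finset.sum_mul_sq_le_sq_mul_sq Finset.univ (fun k => dv (ex k) u p)
    (fun k => ∑ i, b m i * gr (dv (ex k) u) p i)
  have hw : wf u p = ∑ i, dv (ex i) u p ^ 2 := by unfold wf; simp only [sq]
  rw [← hw] at cs
  linarith

end struct

/-! ### Cutoff functions -/

/-- Shifted coordinate function. -/
noncomputable def cf {n : ℕ} (x₀ : EuclideanSpace ℝ (Fin n)) (i : Fin n) (p : SpT n) : ℝ :=
  p.2 i - x₀ i

/-- Shifted time. -/
def tf {n : ℕ} (s : ℝ) (p : SpT n) : ℝ := p.1 - s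

/-- Spatial cutoff. -/
noncomputable def zf {n : ℕ} (x₀ : EuclideanSpace ℝ (Fin n)) (R : ℝ) (p : SpT n) : ℝ :=
  R ^ 2 + (-1) * ∑ i, cf x₀ i p * cf x₀ i p

section cut

variable {n : ℕ} {Ω : Set (SpT n)} {p : SpT n} {a : Fin n → Fin n → ℝ}
  {x₀ : EuclideanSpace ℝ (Fin n)} {R s : ℝ}

theorem cf_sm (i : Fin n) : Sm Ω (cf x₀ i) := by
  unfold Sm cf
  apply ContDiff.contDiffOn
  fun_prop

theorem tf_sm : Sm Ω (tf s : SpT n → ℝ) := by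
  unfold Sm tf
  apply ContDiff.contDiffOn
  fun_prop

theorem zf_sm : Sm Ω (zf x₀ R) :=
  (Sm.const _).add ((Sm.const _).mul (Sm.sum fun i => (cf_sm i).mul (cf_sm i)))

theorem dv_cf (i : Fin n) (v : SpT n) : dv v (cf x₀ i) = fun _ => v.2 i := by
  ext p
  have h : HasFDerivAt (cf x₀ i)
      ((EuclideanSpace.proj (𝕜 := ℝ) i).comp (ContinuousLinearMap.snd ℝ ℝ _)) p := by
    have := ((EuclideanSpace.proj (𝕜 := ℝ) i).comp
      (ContinuousLinearMap.snd ℝ ℝ (EuclideanSpace ℝ (Fin n)))).hasFDerivAt (x := p)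
    exact this.sub_const (x₀ i)
  unfold dv
  rw [h.fderiv]
  simp

theorem dv_tf (v : SpT n) : dv v (tf s) = fun _ => v.1 := by
  ext p
  have h : HasFDerivAt (tf s) (ContinuousLinearMap.fst ℝ ℝ (EuclideanSpace ℝ (Fin n))) p := by
    have := (ContinuousLinearMap.fst ℝ ℝ (EuclideanSpace ℝ (Fin n))).hasFDerivAt (x := p)
    exact this.sub_const s
  unfold dv
  rw [h.fderiv]
  simp

theorem Lop_cf (i : Fin n) : Lop a (cf x₀ i) p = 0 := by
  unfold Lop
  simp [dv_cf, dv_const, et]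

theorem Lop_tf : Lop a (tf s) p = -1 := by
  unfold Lop
  simp [dv_tf, dv_const, et]

theorem gr_tf : gr (tf s) p = 0 := by
  ext i; simp [gr, dv_tf, ex]

theorem gr_cf (i : Fin n) : gr (cf x₀ i) p = Pi.single i 1 := by
  ext j; simp [gr, dv_cf, ex, Pi.single_apply, eq_comm]

theorem qf_single (i : Fin n) : qf a (Pi.single i 1) (Pi.single i 1) = a i i := by
  simp [qf, Pi.single_apply]

theorem Lop_zf (ha : ∀ i j, a i j = a j i) : Lop a (zf x₀ R) p = -2 * ∑ i, a i i := by
  have hO : IsOpen (Set.univ : Set (SpT n)) := isOpen_univ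
  have hp : p ∈ (Set.univ : Set (SpT n)) := Set.mem_univ _
  have hs : Sm Set.univ (fun p : SpT n => ∑ i, cf x₀ i p * cf x₀ i p) :=
    Sm.sum fun i => (cf_sm i).mul (cf_sm i)
  unfold zf
  rw [Lop_add hO (Sm.const _) ((Sm.const _).mul hs) hp, Lop_const,
    Lop_mul hO ha (Sm.const _) hs hp, Lop_const, gr_const, qf_zero_left,
    Lop_sum hO (fun i => (cf_sm i).mul (cf_sm i)) hp]
  have : ∀ i, Lop a (fun q => cf x₀ i q * cf x₀ i q) p = 2 * a i i := by
    intro i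
    rw [Lop_mul hO ha (cf_sm i) (cf_sm i) hp, Lop_cf, gr_cf, qf_single]; ring
  simp only [this, ← Finset.mul_sum]; ring

theorem sum_cf : ∑ i, cf x₀ i p * cf x₀ i p = dist p.2 x₀ ^ 2 := by
  rw [EuclideanSpace.dist_eq, Real.sq_sqrt (Finset.sum_nonneg fun _ _ => sq_nonneg _)]
  refine Finset.sum_congr rfl fun i _ => ?_
  rw [Real.dist_eq, sq_abs, cf]; ring

theorem zf_eq : zf x₀ R p = R ^ 2 - dist p.2 x₀ ^ 2 := by
  unfold zf; rw [sum_cf]; ring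

theorem zf_le : zf x₀ R p ≤ R ^ 2 := by
  rw [zf_eq]; nlinarith [sq_nonneg (dist p.2 x₀)]

theorem zf_nonneg (h : dist p.2 x₀ ≤ R) : 0 ≤ zf x₀ R p := by
  rw [zf_eq]; nlinarith [dist_nonneg (x := p.2) (y := x₀)]

theorem zf_pos (h : dist p.2 x₀ < R) : 0 < zf x₀ R p := by
  rw [zf_eq]; nlinarith [dist_nonneg (x := p.2) (y := x₀)]

theorem gr_zf (i : Fin n) : gr (zf x₀ R) p i = -2 * cf x₀ i p := by
  have hO : IsOpen (Set.univ : Set (SpT n)) := isOpen_univ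
  have hp : p ∈ (Set.univ : Set (SpT n)) := Set.mem_univ _
  have hs : Sm Set.univ (fun p : SpT n => ∑ i, cf x₀ i p * cf x₀ i p) :=
    Sm.sum fun i => (cf_sm i).mul (cf_sm i)
  unfold zf
  rw [gr_add hO (Sm.const _) ((Sm.const _).mul hs) hp, gr_const,
    gr_mul hO (Sm.const _) hs hp, gr_const, gr_sum hO (fun i => (cf_sm i).mul (cf_sm i)) hp]
  have : ∀ i, gr (fun q => cf x₀ i q * cf x₀ i q) p = (2 * cf x₀ i p) • Pi.single i 1 := by
    intro i
    rw [gr_mul hO (cf_sm i) (cf_sm i) hp, gr_cf, ← add_smul]; ring_nf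
  simp [this, Finset.sum_apply, Pi.single_apply]

theorem qf_zf_le {u : SpT n → ℝ} (h : dist p.2 x₀ ≤ R) :
    qf (af u p) (gr (zf x₀ R) p) (gr (zf x₀ R) p) ≤ 4 * R ^ 2 := by
  refine (qf_le _).trans ?_
  simp only [gr_zf]
  have : ∑ i, (-2 * cf x₀ i p) ^ 2 = 4 * ∑ i, cf x₀ i p * cf x₀ i p := by
    rw [Finset.mul_sum]; refine Finset.sum_congr rfl fun i _ => ?_
    ring
  rw [this, sum_cf]
  nlinarith [dist_nonneg (x := p.2) (y := x₀)]

end cut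

/-! ### Height estimate -/

theorem height_est {n : ℕ} {Ω : Set (SpT n)} {u v : SpT n → ℝ} (S : Sol Ω u) (hv : Sm Ω v)
    (hL : ∀ p ∈ Ω, Lop (af u p) v p = 0) {s T R H₀ H₁ : ℝ} {x₀ : EuclideanSpace ℝ (Fin n)}
    (hR : 0 < R) (hH0 : 0 ≤ H₀) (hH1 : 0 < H₁) (hsT : s ≤ T)
    (hsub : Set.Icc s T ×ˢ Metric.closedBall x₀ R ⊆ Ω)
    (h0 : ∀ x ∈ Metric.closedBall x₀ R, v (s, x) ≤ H₀)
    (h1 : ∀ t ∈ Set.Icc s T, ∀ x ∈ Metric.closedBall x₀ R, v (t, x) ≤ H₁) :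
    v (T, x₀) ≤ H₀ + (2 * n + 1) * H₁ / R ^ 2 * (T - s) := by
  set k := H₁ / R ^ 2 with hk
  have hkp : 0 < k := by positivity
  have hkR : k * R ^ 2 = H₁ := by rw [hk]; field_simp
  set c := (2 * n + 1) * H₁ / R ^ 2 with hc
  have hck : c = (2 * n + 1) * k := by rw [hc, hk]; ring
  have hcp : 0 ≤ c := by rw [hck]; positivity
  have s2 : Sm Ω (fun q => k * zf x₀ R q) := (Sm.const k).mul zf_sm
  have s3 : Sm Ω (fun q => (-c) * tf s q) := (Sm.const (-c)).mul tf_sm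
  have s1 : Sm Ω (fun q => v q + k * zf x₀ R q) := hv.add s2
  have hm := maxp S.op (Q := fun q => (v q + k * zf x₀ R q) + (-c) * tf s q)
    (s1.add s3) (M := H₀ + H₁) hsub ?_ ?_ ?_ (T, x₀)
    ⟨⟨hsT, le_refl _⟩, Metric.mem_closedBall_self hR.le⟩
  · simp only [zf_eq, tf, dist_self] at hm
    nlinarith
  · intro x hx
    have := h0 x hx
    have h3 := mul_le_mul_of_nonneg_left (zf_le (x₀ := x₀) (R := R) (p := (s, x))) hkp.le
    simp only [tf]
    linarith
  · intro t ht x hx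
    have := h1 t ht x (by simpa using hx.le)
    have h3 : 0 ≤ c * (t - s) := mul_nonneg hcp (by linarith [ht.1])
    simp only [zf_eq, tf, hx]
    linarith
  · intro p hp hp1 hp2 hp3 hM hg hLop
    have := hLop (af u p) af_symm qf_nonneg
    rw [Lop_add S.op s1 s3 hp, Lop_add S.op hv s2 hp, hL p hp,
      Lop_mul S.op af_symm (Sm.const k) zf_sm hp, Lop_mul S.op af_symm (Sm.const (-c)) tf_sm hp,
      Lop_const, Lop_const, gr_const, gr_const, qf_zero_left, qf_zero_left, Lop_zf af_symm,
      Lop_tf] at this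
    have ht := trace_le (u := u) (p := p)
    have := mul_le_mul_of_nonneg_left ht hkp.le
    nlinarith

/-! ### Gradient preservation -/

theorem alg_pres {W e Le Lw X G : ℝ} (q1 : e * G = -3 * W * X)
    (hL : W * (e * (e * Le + e * Le + 2 * X) + (e * e) * Le + 2 * (2 * e * X))
      + e * (e * e) * Lw + 2 * (3 * e ^ 2 * G) ≤ 0)
    (l3 : e * (27 / 2 * W * X) ≤ e * (e ^ 2 * Lw)) (l4 : 0 < W * (3 * e ^ 2 * Le))
    (l5 : 0 ≤ e * W * X) : False := by
  have : W * (e * (e * Le + e * Le + 2 * X) + (e * e) * Le + 2 * (2 * e * X))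
      + e * (e * e) * Lw + 2 * (3 * e ^ 2 * G)
      = W * (3 * e ^ 2 * Le) + (e * (e ^ 2 * Lw) - e * (27 / 2 * W * X)) + 3 / 2 * (e * W * X) := by
    linear_combination 6 * e * q1
  linarith

theorem grad_pres {n : ℕ} {Ω : Set (SpT n)} {u : SpT n → ℝ} (S : Sol Ω u)
    {s T R K : ℝ} {x₀ : EuclideanSpace ℝ (Fin n)}
    (hR : 0 < R) (hK : 0 ≤ K) (hsT : s ≤ T) (hT : (2 * n + 1) * (T - s) ≤ R ^ 2 / 2)
    (hsub : Set.Icc s T ×ˢ Metric.closedBall x₀ R ⊆ Ω)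
    (h0 : ∀ x ∈ Metric.closedBall x₀ R, wf u (s, x) ≤ K) :
    wf u (T, x₀) ≤ 8 * (1 + K) := by
  set c : ℝ := 2 * n + 1 with hc
  have hcp : 0 < c := by positivity
  set η : SpT n → ℝ := fun q => zf x₀ R q + (-c) * tf s q with hη
  have sη : Sm Ω η := zf_sm.add ((Sm.const (-c)).mul tf_sm)
  have sη2 : Sm Ω (fun q => η q * η q) := sη.mul sη
  have sη3 : Sm Ω (fun q => η q * (η q * η q)) := sη.mul sη2
  have hm := maxp S.op (Q := fun q => (1 + wf u q) * (η q * (η q * η q)))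
    (S.W.mul sη3) (M := (1 + K) * (R ^ 2 * (R ^ 2 * R ^ 2))) hsub ?_ ?_ ?_ (T, x₀)
    ⟨⟨hsT, le_refl _⟩, Metric.mem_closedBall_self hR.le⟩
  · have hη0 : R ^ 2 / 2 ≤ η (T, x₀) := by
      simp only [hη, zf_eq, tf, dist_self]; nlinarith
    have hw := wf_nonneg (u := u) (p := (T, x₀))
    have h3 : (R ^ 2 / 2) ^ 3 ≤ η (T, x₀) ^ 3 := pow_le_pow_left₀ (by positivity) hη0 3
    have h4 := mul_le_mul_of_nonneg_left h3 (by linarith : 0 ≤ 1 + wf u (T, x₀))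
    have h5 : (1 + wf u (T, x₀)) * (R ^ 2) ^ 3 ≤ 8 * (1 + K) * (R ^ 2) ^ 3 := by
      have hm' : (1 + wf u (T, x₀)) * (η (T, x₀) * (η (T, x₀) * η (T, x₀)))
        ≤ (1 + K) * (R ^ 2 * (R ^ 2 * R ^ 2)) := hm
      have e1 : (1 + wf u (T, x₀)) * (η (T, x₀) * (η (T, x₀) * η (T, x₀)))
        = (1 + wf u (T, x₀)) * η (T, x₀) ^ 3 := by ring
      have e2 : (1 + wf u (T, x₀)) * (R ^ 2 / 2) ^ 3
        = (1 + wf u (T, x₀)) * (R ^ 2) ^ 3 / 8 := by ring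
      have e3 : (1 + K) * (R ^ 2 * (R ^ 2 * R ^ 2)) = (1 + K) * (R ^ 2) ^ 3 := by ring
      rw [e1, e3] at hm'
      rw [e2] at h4
      linarith
    have := le_of_mul_le_mul_right h5 (by positivity)
    linarith
  · intro x hx
    have h2 : η (s, x) = zf x₀ R (s, x) := by simp [hη, tf]
    have h3 := zf_le (x₀ := x₀) (R := R) (p := (s, x))
    have h4 := zf_nonneg (x₀ := x₀) (R := R) (p := (s, x)) (by simpa using hx)
    have := h0 x hx
    have hw := wf_nonneg (u := u) (p := (s, x))
    simp only [h2]
    gcongr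
  · intro t ht x hx
    have h2 : η (t, x) ≤ 0 := by
      simp only [hη, zf_eq, tf, hx]; nlinarith [ht.1]
    have hw := wf_nonneg (u := u) (p := (t, x))
    have : η (t, x) * (η (t, x) * η (t, x)) ≤ 0 :=
      mul_nonpos_of_nonpos_of_nonneg h2 (mul_self_nonneg _)
    have h5 : 0 ≤ (1 + K) * (R ^ 2 * (R ^ 2 * R ^ 2)) := by positivity
    have h6 : (1 + wf u (t, x)) * (η (t, x) * (η (t, x) * η (t, x))) ≤ 0 :=
      mul_nonpos_of_nonneg_of_nonpos (by linarith) this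
    exact h6.trans h5
  · intro p hp hp1 hp2 hp3 hM hg hLop
    have hw := wf_nonneg (u := u) (p := p)
    have hη0 : 0 < η p := by
      by_contra hcon
      push Not at hcon
      have : η p * (η p * η p) ≤ 0 :=
        mul_nonpos_of_nonpos_of_nonneg hcon (mul_self_nonneg _)
      have h5 : 0 ≤ (1 + K) * (R ^ 2 * (R ^ 2 * R ^ 2)) := by positivity
      have h6 : (1 + wf u p) * (η p * (η p * η p)) ≤ 0 :=
        mul_nonpos_of_nonneg_of_nonpos (by linarith) this
      linarith
    have hLη : 0 < Lop (af u p) η p := by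
      rw [hη, Lop_add S.op zf_sm ((Sm.const (-c)).mul tf_sm) hp,
        Lop_mul S.op af_symm (Sm.const (-c)) tf_sm hp, Lop_const, gr_const, qf_zero_left,
        Lop_zf af_symm, Lop_tf]
      have ht := trace_le (u := u) (p := p)
      rw [hc]; linarith
    have hL := hLop (af u p) af_symm qf_nonneg
    have gW : gr (fun q => 1 + wf u q) p = gr (wf u) p := by
      rw [gr_add S.op (Sm.const 1) S.w hp, gr_const, zero_add]
    have LW : Lop (af u p) (fun q => 1 + wf u q) p = Lop (af u p) (wf u) p := by
      rw [Lop_add S.op (Sm.const 1) S.w hp, Lop_const, zero_add]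
    have g2 : gr (fun q => η q * η q) p = (2 * η p) • gr η p := by
      rw [gr_mul S.op sη sη hp, ← add_smul]; ring_nf
    have g3 : gr (fun q => η q * (η q * η q)) p = (3 * η p ^ 2) • gr η p := by
      rw [gr_mul S.op sη sη2 hp, g2, smul_smul, ← add_smul]; ring_nf
    rw [gr_mul S.op S.W sη3 hp, gW, g3] at hg
    have hg' : η p • gr (wf u) p = (-3 * (1 + wf u p)) • gr η p := by
      ext i
      have := congrFun hg i
      simp only [Pi.add_apply, Pi.smul_apply, smul_eq_mul, Pi.zero_apply] at this ⊢
      have h3 : η p ^ 2 * (η p * gr (wf u) p i - -3 * (1 + wf u p) * gr η p i) = 0 := by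
        linear_combination this
      rcases mul_eq_zero.1 h3 with h4 | h4
      · exact absurd h4 (by positivity)
      · linarith
    rw [Lop_mul S.op af_symm S.W sη3 hp, gW, LW, g3, Lop_mul S.op af_symm sη sη2 hp, g2,
      Lop_mul S.op af_symm sη sη hp, qf_smul_right, qf_smul_right] at hL
    set X := qf (af u p) (gr η p) (gr η p) with hX
    have hX0 : 0 ≤ X := qf_nonneg _
    have q1 : η p * qf (af u p) (gr (wf u) p) (gr η p) = -3 * (1 + wf u p) * X := by
      rw [← qf_smul_left, hg', qf_smul_left]
    have q2 : η p ^ 2 * qf (af u p) (gr (wf u) p) (gr (wf u) p) = 9 * (1 + wf u p) ^ 2 * X := by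
      have : η p * (η p * qf (af u p) (gr (wf u) p) (gr (wf u) p))
          = qf (af u p) (η p • gr (wf u) p) (η p • gr (wf u) p) := by
        rw [qf_smul_left, qf_smul_right]
      rw [hg', qf_smul_left, qf_smul_right] at this
      linear_combination this
    have hLw := S.Lw hp
    have hgw := S.gw_le hp
    set Sg := ∑ k, qf (af u p) (gr (dv (ex k) u) p) (gr (dv (ex k) u) p) with hSg
    have hSg0 : 0 ≤ Sg := Finset.sum_nonneg fun _ _ => qf_nonneg _
    set Y := qf (af u p) (gr (wf u) p) (gr (wf u) p) with hY
    have hr := rf_mul (u := u) (p := p)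
    have hrp := rf_pos (u := u) (p := p)
    -- lower bound for `Lop w`
    have l1 : 3 / 2 * rf u p * Y ≤ Lop (af u p) (wf u) p := by
      have : rf u p * Y ≤ 4 * Sg := by
        have h1 : Y ≤ 4 * (1 + wf u p) * Sg := by nlinarith
        have h2 := mul_le_mul_of_nonneg_left h1 hrp.le
        have h3 : rf u p * (4 * (1 + wf u p) * Sg) = 4 * Sg := by
          linear_combination 4 * Sg * hr
        linarith
      rw [hLw]; linarith
    have l2 : 27 / 2 * (1 + wf u p) * X ≤ η p ^ 2 * Lop (af u p) (wf u) p := by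
      have h1 := mul_le_mul_of_nonneg_left l1 (sq_nonneg (η p))
      have h2 : η p ^ 2 * (3 / 2 * rf u p * Y) = 27 / 2 * (1 + wf u p) * X := by
        linear_combination 3 / 2 * rf u p * q2 + 27 / 2 * (1 + wf u p) * X * hr
      linarith
    have l3 := mul_le_mul_of_nonneg_left l2 hη0.le
    have l4 : 0 < (1 + wf u p) * (3 * η p ^ 2 * Lop (af u p) η p) := by positivity
    have l5 : 0 ≤ η p * (1 + wf u p) * X := by positivity
    exact alg_pres q1 hL l3 l4 l5

/-! ### Interior gradient estimate -/

theorem alg_int {w z tr X Z Sg Lw R N : ℝ} (k1 : 0 ≤ 2 * z ^ 2 * Sg + 4 * z * Z + 8 * w * X)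
    (k2 : z ^ 2 * (2 * Sg) ≤ z ^ 2 * Lw) (k3 : w * z * tr ≤ w * R ^ 2 * N)
    (k4 : w * X ≤ w * (4 * R ^ 2)) :
    - (w * ((4 * N + 24) * R ^ 2)) ≤ z * z * Lw
        + w * (z * (-2 * tr) + z * (-2 * tr) + 2 * X) + 2 * (2 * z * Z) := by
  linear_combination k1 + k2 + 4 * k3 + 6 * k4

theorem alg_int2 {w z tr X Z Lw R N t T A r u : ℝ}
    (hL : t * ((z * z) * Lw + w * (z * (-2 * tr) + z * (-2 * tr) + 2 * X) + 2 * (2 * z * Z))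
      + z * z * w * -1 + 2 * 0
      + (A * (u * 0 + u * 0 + 2 * (r * w)) + u * u * 0 + 2 * 0) ≤ 0)
    (k6 : t * -(w * ((4 * N + 24) * R ^ 2)) ≤ t * (z * z * Lw
        + w * (z * (-2 * tr) + z * (-2 * tr) + 2 * X) + 2 * (2 * z * Z)))
    (k7 : t * (w * ((4 * N + 24) * R ^ 2)) ≤ T * (w * ((4 * N + 24) * R ^ 2)))
    (k8 : z * z * w ≤ R ^ 4 * w)
    (k10 : (R ^ 4 + T * ((4 * N + 24) * R ^ 2)) * w ≤ A * r * w)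
    (k11 : 0 < A * r * w) : False := by
  have : (0 : ℝ) < 0 := by linear_combination hL + k6 + k7 + k8 + k10 + k11
  exact absurd this (lt_irrefl _)

set_option maxHeartbeats 1000000 in
theorem grad_int {n : ℕ} {Ω : Set (SpT n)} {u : SpT n → ℝ} (S : Sol Ω u)
    {s T R K H : ℝ} {x₀ : EuclideanSpace ℝ (Fin n)}
    (hR : 0 < R) (hK : 0 ≤ K) (hsT : s ≤ T) 
    (hsub : Set.Icc s T ×ˢ Metric.closedBall x₀ R ⊆ Ω)
    (h0 : ∀ t ∈ Set.Icc s T, ∀ x ∈ Metric.closedBall x₀ R, wf u (t, x) ≤ K)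
    (h1 : ∀ t ∈ Set.Icc s T, ∀ x ∈ Metric.closedBall x₀ R, |u (t, x)| ≤ H) :
    (T - s) * R ^ 4 * wf u (T, x₀)
      ≤ (1 + K) * (R ^ 4 + (T - s) * ((4 * n + 24) * R ^ 2)) * H ^ 2 := by
  set A := (1 + K) * (R ^ 4 + (T - s) * ((4 * n + 24) * R ^ 2)) with hA
  have hTs : 0 ≤ T - s := by linarith
  have hAp : 0 < A := by positivity
  have sz2 : Sm Ω (fun q => zf x₀ R q * zf x₀ R q) := zf_sm.mul zf_sm
  have sX : Sm Ω (fun q => (zf x₀ R q * zf x₀ R q) * wf u q) := sz2.mul S.w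
  have sY : Sm Ω (fun q => tf s q * ((zf x₀ R q * zf x₀ R q) * wf u q)) := tf_sm.mul sX
  have su2 : Sm Ω (fun q => u q * u q) := S.sm.mul S.sm
  have sA : Sm Ω (fun q => A * (u q * u q)) := (Sm.const A).mul su2
  have hu2 : ∀ t ∈ Set.Icc s T, ∀ x ∈ Metric.closedBall x₀ R, u (t, x) * u (t, x) ≤ H ^ 2 := by
    intro t ht x hx
    have := h1 t ht x hx
    have := sq_le_sq' (by linarith [neg_abs_le (u (t, x))]) ((le_abs_self _).trans this)
    nlinarith
  have hm := maxp S.op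
    (Q := fun q => tf s q * ((zf x₀ R q * zf x₀ R q) * wf u q) + A * (u q * u q))
    (sY.add sA) (M := A * H ^ 2) hsub ?_ ?_ ?_ (T, x₀)
    ⟨⟨hsT, le_refl _⟩, Metric.mem_closedBall_self hR.le⟩
  · simp only [zf_eq, tf, dist_self] at hm
    have : 0 ≤ A * (u (T, x₀) * u (T, x₀)) := mul_nonneg hAp.le (mul_self_nonneg _)
    nlinarith
  · intro x hx
    have := mul_le_mul_of_nonneg_left (hu2 s ⟨le_refl _, hsT⟩ x hx) hAp.le
    simp only [tf]; linarith
  · intro t ht x hx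
    have := mul_le_mul_of_nonneg_left (hu2 t ht x (by simpa using hx.le)) hAp.le
    simp only [zf_eq, hx]; linarith
  · intro p hp hp1 hp2 hp3 hM hg hLop
    have hw := wf_nonneg (u := u) (p := p)
    have hpt : p.1 ∈ Set.Icc s T := ⟨hp1.le, hp2⟩
    have hpx : p.2 ∈ Metric.closedBall x₀ R := by simpa using hp3.le
    have hwK : wf u p ≤ K := h0 p.1 hpt p.2 hpx
    have huu := mul_le_mul_of_nonneg_left (hu2 p.1 hpt p.2 hpx) hAp.le
    have hw0 : 0 < wf u p := by
      rcases hw.lt_or_eq with h | h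
      · exact h
      · exfalso
        simp only [← h] at hM
        simp only [Prod.mk.eta] at huu
        linarith
    have hz0 := zf_nonneg (x₀ := x₀) (R := R) (p := p) hp3.le
    have hzR := zf_le (x₀ := x₀) (R := R) (p := p)
    have hL := hLop (af u p) af_symm qf_nonneg
    have gz2 : gr (fun q => zf x₀ R q * zf x₀ R q) p = (2 * zf x₀ R p) • gr (zf x₀ R) p := by
      rw [gr_mul S.op zf_sm zf_sm hp, ← add_smul]; ring_nf
    rw [Lop_add S.op sY sA hp, Lop_mul S.op af_symm tf_sm sX hp, gr_tf, qf_zero_left, Lop_tf,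
      Lop_mul S.op af_symm sz2 S.w hp, Lop_mul S.op af_symm zf_sm zf_sm hp, gz2, qf_smul_left,
      Lop_zf af_symm,
      Lop_mul S.op af_symm (Sm.const A) su2 hp, Lop_const, gr_const, qf_zero_left,
      Lop_mul S.op af_symm S.sm S.sm hp, S.Lu hp, gu] at hL
    have hLw := S.Lw hp
    have hgw := S.gw_le hp
    have hy := qf_young (a := af u p) af_symm qf_nonneg (zf x₀ R p) (4 * wf u p)
      (gr (wf u) p) (gr (zf x₀ R) p)
    rw [qf_symm af_symm (gr (wf u) p) (gr (zf x₀ R) p)] at hy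
    have hzz := qf_zf_le (u := u) (x₀ := x₀) (R := R) (p := p) hp3.le
    have hzz0 := qf_nonneg (u := u) (p := p) (gr (zf x₀ R) p)
    have hww0 := qf_nonneg (u := u) (p := p) (gr (wf u) p)
    have hr := rf_mul (u := u) (p := p)
    have hrp := rf_pos (u := u) (p := p)
    have htr := trace_le (u := u) (p := p)
    have htr0 := trace_nonneg (u := u) (p := p)
    set Sg := ∑ k, qf (af u p) (gr (dv (ex k) u) p) (gr (dv (ex k) u) p) with hSg
    set X := qf (af u p) (gr (zf x₀ R) p) (gr (zf x₀ R) p)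
    set Y := qf (af u p) (gr (wf u) p) (gr (wf u) p)
    set Z := qf (af u p) (gr (zf x₀ R) p) (gr (wf u) p)
    set z := zf x₀ R p
    set w := wf u p
    set r := rf u p
    set tr := ∑ i, af u p i i
    -- lower bound for the operator on `z² w`
    have k1 : 0 ≤ 2 * z ^ 2 * Sg + 4 * z * Z + 8 * w * X := by
      have h3 : z ^ 2 * Y ≤ z ^ 2 * (4 * w * Sg) :=
        mul_le_mul_of_nonneg_left hgw (sq_nonneg _)
      have h4 : 0 ≤ (2 * w) * (2 * z ^ 2 * Sg + 4 * z * Z + 8 * w * X) := by nlinarith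
      exact nonneg_of_mul_nonneg_right h4 (by linarith)
    have k2 : z ^ 2 * (2 * Sg) ≤ z ^ 2 * Lop (af u p) (wf u) p := by
      apply mul_le_mul_of_nonneg_left _ (sq_nonneg _)
      rw [hLw]
      have := mul_nonneg hrp.le hww0
      linarith
    have k3 : w * z * tr ≤ w * R ^ 2 * n := by
      have h6 : z * tr ≤ R ^ 2 * n := mul_le_mul hzR htr htr0 (by positivity)
      have h7 := mul_le_mul_of_nonneg_left h6 hw
      linarith
    have k4 : w * X ≤ w * (4 * R ^ 2) := mul_le_mul_of_nonneg_left hzz hw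
    have k5 : - (w * ((4 * n + 24) * R ^ 2)) ≤ z * z * Lop (af u p) (wf u) p
        + w * (z * (-2 * tr) + z * (-2 * tr) + 2 * X) + 2 * (2 * z * Z) :=
      alg_int k1 k2 k3 k4
    have ht0 : 0 < tf s p := by simp only [tf]; linarith
    have ht1 : tf s p ≤ T - s := by simp only [tf]; linarith
    have k6 := mul_le_mul_of_nonneg_left k5 ht0.le
    have k7 : tf s p * (w * ((4 * n + 24) * R ^ 2)) ≤ (T - s) * (w * ((4 * n + 24) * R ^ 2)) :=
      mul_le_mul_of_nonneg_right ht1 (by positivity)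
    have k8 : z * z * w ≤ R ^ 4 * w := by
      apply mul_le_mul_of_nonneg_right _ hw
      calc z * z ≤ R ^ 2 * R ^ 2 := mul_le_mul hzR hzR hz0 (sq_nonneg _)
        _ = R ^ 4 := by ring
    have k9 : R ^ 4 + (T - s) * ((4 * n + 24) * R ^ 2) ≤ A * r := by
      have h3 : 1 ≤ (1 + K) * r := by
        have h6 : r * (1 + w) ≤ r * (1 + K) := mul_le_mul_of_nonneg_left (by linarith) hrp.le
        linarith
      have h4 : 0 ≤ R ^ 4 + (T - s) * ((4 * n + 24) * R ^ 2) := by positivity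
      have h5 := mul_le_mul_of_nonneg_right h3 h4
      rw [hA]; linarith
    have k10 := mul_le_mul_of_nonneg_right k9 hw
    have k11 : 0 < A * r * w := by positivity
    exact alg_int2 hL k6 k7 k8 k10 k11

/-! ### Evolution of the Hessian -/

theorem abs_sum_le {n : ℕ} {g : Fin n → ℝ} {c : ℝ} (h : ∀ i, |g i| ≤ c) :
    |∑ i, g i| ≤ n * c := by
  calc |∑ i, g i| ≤ ∑ i, |g i| := Finset.abs_sum_le_sum_abs _ _
    _ ≤ ∑ _i : Fin n, c := Finset.sum_le_sum fun i _ => h i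
    _ = n * c := by simp

theorem abs_mul_le' {a b c d : ℝ} (h1 : |a| ≤ c) (h2 : |b| ≤ d) : |a * b| ≤ c * d := by
  rw [abs_mul]
  exact mul_le_mul h1 h2 (abs_nonneg _) ((abs_nonneg _).trans h1)

theorem abs_add_le' {a b c d : ℝ} (h1 : |a| ≤ c) (h2 : |b| ≤ d) : |a + b| ≤ c + d :=
  (abs_add_le a b).trans (add_le_add h1 h2)

section hess

variable {n : ℕ} {Ω : Set (SpT n)} {u : SpT n → ℝ} {p : SpT n} {P Q T : ℝ}

theorem Sol.dw_abs (S : Sol Ω u) (hp : p ∈ Ω)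
    (h1 : ∀ i, |dv (ex i) u p| ≤ P) (h2 : ∀ i j, |dv (ex i) (dv (ex j) u) p| ≤ Q) (k : Fin n) :
    |dv (ex k) (wf u) p| ≤ 2 * n * (P * Q) := by
  rw [S.dw hp, abs_mul, abs_two]
  have := abs_sum_le (fun i => abs_mul_le' (h1 i) (h2 k i))
  linarith

theorem Sol.ddw_abs (S : Sol Ω u) (hp : p ∈ Ω)
    (h1 : ∀ i, |dv (ex i) u p| ≤ P) (h2 : ∀ i j, |dv (ex i) (dv (ex j) u) p| ≤ Q)
    (h3 : ∀ i j k, |dv (ex i) (dv (ex j) (dv (ex k) u)) p| ≤ T) (k l : Fin n) :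
    |dv (ex k) (dv (ex l) (wf u)) p| ≤ 2 * n * (Q ^ 2 + P * T) := by
  unfold wf
  rw [dv2_sum S.op (fun i => (S.d1 i).mul (S.d1 i)) hp]
  have : ∀ i, |dv (ex k) (dv (ex l) (fun q => dv (ex i) u q * dv (ex i) u q)) p|
      ≤ 2 * (Q ^ 2 + P * T) := by
    intro i
    rw [dv2_mul S.op (S.d1 i) (S.d1 i) hp]
    have := abs_add_le' (abs_add_le' (abs_mul_le' (h3 k l i) (h1 i))
      (abs_mul_le' (h2 l i) (h2 k i))) (abs_add_le' (abs_mul_le' (h2 k i) (h2 l i))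
      (abs_mul_le' (h1 i) (h3 k l i)))
    linarith
  have := abs_sum_le this
  linarith

theorem Sol.dr_abs (S : Sol Ω u) (hp : p ∈ Ω)
    (h1 : ∀ i, |dv (ex i) u p| ≤ P) (h2 : ∀ i j, |dv (ex i) (dv (ex j) u) p| ≤ Q) (k : Fin n) :
    |dv (ex k) (rf u) p| ≤ 2 * n * (P * Q) := by
  rw [S.dr hp]
  have hr := rf_pos (u := u) (p := p)
  have hr1 := rf_le_one (u := u) (p := p)
  have : |-(rf u p * rf u p)| ≤ 1 := by
    rw [abs_neg, abs_mul_self]; nlinarith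
  have := abs_mul_le' this (S.dw_abs hp h1 h2 k)
  linarith

theorem Sol.ddr_abs (S : Sol Ω u) (hp : p ∈ Ω) (hn : 1 ≤ n) (hP : 0 ≤ P) (hP1 : P ≤ 1)
    (hQ : 0 ≤ Q) (hT : 0 ≤ T)
    (h1 : ∀ i, |dv (ex i) u p| ≤ P) (h2 : ∀ i j, |dv (ex i) (dv (ex j) u) p| ≤ Q)
    (h3 : ∀ i j k, |dv (ex i) (dv (ex j) (dv (ex k) u)) p| ≤ T) (k l : Fin n) :
    |dv (ex k) (dv (ex l) (rf u)) p| ≤ 10 * n ^ 2 * (Q ^ 2 + P * T) := by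
  have hN : (1 : ℝ) ≤ n := by exact_mod_cast hn
  have e1 : dv (ex k) (dv (ex l) (fun q => rf u q * (1 + wf u q))) p = 0 := by
    rw [dv_congr S.op (H := fun _ => 0) (fun q hq => ?_) hp, dv_const]
    rw [dv_congr S.op (H := fun _ => 1) (fun q _ => rf_mul) hq, dv_const]
  have c0 : ∀ v : SpT n, dv v (fun _ : SpT n => (1 : ℝ)) = fun _ => 0 := fun v => by
    ext q; exact dv_const 1 _ q
  rw [dv2_mul S.op S.r S.W hp, dv2_add S.op (Sm.const 1) S.w hp, dv_add S.op (Sm.const 1) S.w hp,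
    dv_add S.op (Sm.const 1) S.w hp, c0, c0, dv_const] at e1
  have hr := rf_pos (u := u) (p := p)
  have hr1 := rf_le_one (u := u) (p := p)
  have hw := wf_nonneg (u := u) (p := p)
  have hra : |rf u p| ≤ 1 := by rw [abs_of_pos hr]; exact hr1
  have a1 := abs_mul_le' (S.dr_abs hp h1 h2 l) (S.dw_abs hp h1 h2 k)
  have a2 := abs_mul_le' (S.dr_abs hp h1 h2 k) (S.dw_abs hp h1 h2 l)
  have a3 := abs_mul_le' hra (S.ddw_abs hp h1 h2 h3 k l)
  have a4 := abs_add_le' (abs_add_le' a1 a2) a3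
  have e2 : dv (ex k) (dv (ex l) (rf u)) p * (1 + wf u p)
      = -(dv (ex l) (rf u) p * dv (ex k) (wf u) p + dv (ex k) (rf u) p * dv (ex l) (wf u) p
        + rf u p * dv (ex k) (dv (ex l) (wf u)) p) := by
    linear_combination e1
  have e3 : |dv (ex k) (dv (ex l) (rf u)) p * (1 + wf u p)|
      ≤ 8 * n ^ 2 * (P ^ 2 * Q ^ 2) + 2 * n * (Q ^ 2 + P * T) := by
    rw [e2, abs_neg]; refine a4.trans (le_of_eq ?_); ring
  have e4 : |dv (ex k) (dv (ex l) (rf u)) p| ≤ |dv (ex k) (dv (ex l) (rf u)) p * (1 + wf u p)| := by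
    rw [abs_mul, abs_of_pos (by linarith : 0 < 1 + wf u p)]
    nlinarith [abs_nonneg (dv (ex k) (dv (ex l) (rf u)) p)]
  refine e4.trans (e3.trans ?_)
  have hPT : 0 ≤ P * T := mul_nonneg hP hT
  have b1 : P ^ 2 * Q ^ 2 ≤ Q ^ 2 + P * T := by
    have : P ^ 2 ≤ 1 := by nlinarith
    nlinarith [mul_le_mul_of_nonneg_right this (sq_nonneg Q)]
  have b2 : (8 : ℝ) * n ^ 2 * (P ^ 2 * Q ^ 2) ≤ 8 * n ^ 2 * (Q ^ 2 + P * T) :=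
    mul_le_mul_of_nonneg_left b1 (by positivity)
  have b3 : (2 : ℝ) * n * (Q ^ 2 + P * T) ≤ 2 * n ^ 2 * (Q ^ 2 + P * T) := by
    apply mul_le_mul_of_nonneg_right _ (by positivity)
    nlinarith
  linarith

theorem Sol.db_abs (S : Sol Ω u) (hp : p ∈ Ω) (hn : 1 ≤ n) (hP : 0 ≤ P) (hP1 : P ≤ 1)
    (hQ : 0 ≤ Q)
    (h1 : ∀ i, |dv (ex i) u p| ≤ P) (h2 : ∀ i j, |dv (ex i) (dv (ex j) u) p| ≤ Q) (i j k : Fin n) :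
    |dv (ex k) (bf u i j) p| ≤ 4 * n * (P * Q) := by
  have hN : (1 : ℝ) ≤ n := by exact_mod_cast hn
  have hr := rf_pos (u := u) (p := p)
  have hr1 := rf_le_one (u := u) (p := p)
  have hra : |rf u p| ≤ 1 := by rw [abs_of_pos hr]; exact hr1
  rw [S.db hp]
  have h := abs_add_le' (abs_add_le' (abs_mul_le' (abs_mul_le' (h2 k i) (h1 j)) hra)
    (abs_mul_le' (abs_mul_le' (h1 i) (h2 k j)) hra))
    (abs_mul_le' (abs_mul_le' (h1 i) (h1 j)) (S.dr_abs hp h1 h2 k))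
  refine h.trans ?_
  have hPQ : 0 ≤ P * Q := mul_nonneg hP hQ
  have b1 : P * P ≤ 1 := by nlinarith
  have b2 : P * P * (2 * n * (P * Q)) ≤ 1 * (2 * n * (P * Q)) :=
    mul_le_mul_of_nonneg_right b1 (by positivity)
  have b3 : 1 * (P * Q) ≤ n * (P * Q) := mul_le_mul_of_nonneg_right hN hPQ
  linarith

theorem Sol.ddb_abs (S : Sol Ω u) (hp : p ∈ Ω) (hn : 1 ≤ n) (hP : 0 ≤ P) (hP1 : P ≤ 1)
    (hQ : 0 ≤ Q) (hT : 0 ≤ T)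
    (h1 : ∀ i, |dv (ex i) u p| ≤ P) (h2 : ∀ i j, |dv (ex i) (dv (ex j) u) p| ≤ Q)
    (h3 : ∀ i j k, |dv (ex i) (dv (ex j) (dv (ex k) u)) p| ≤ T) (i j k l : Fin n) :
    |dv (ex k) (dv (ex l) (bf u i j)) p| ≤ 20 * n ^ 2 * (Q ^ 2 + P * T) := by
  have hN : (1 : ℝ) ≤ n := by exact_mod_cast hn
  have hr := rf_pos (u := u) (p := p)
  have hr1 := rf_le_one (u := u) (p := p)
  have hra : |rf u p| ≤ 1 := by rw [abs_of_pos hr]; exact hr1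
  change |dv (ex k) (dv (ex l) (fun q => (dv (ex i) u q * dv (ex j) u q) * rf u q)) p| ≤ _
  rw [dv2_mul S.op ((S.d1 i).mul (S.d1 j)) S.r hp, dv2_mul S.op (S.d1 i) (S.d1 j) hp,
    dv_mul S.op (S.d1 i) (S.d1 j) hp, dv_mul S.op (S.d1 i) (S.d1 j) hp]
  have g2 := abs_add_le' (abs_add_le' (abs_mul_le' (h3 k l i) (h1 j))
      (abs_mul_le' (h2 l i) (h2 k j))) (abs_add_le' (abs_mul_le' (h2 k i) (h2 l j))
      (abs_mul_le' (h1 i) (h3 k l j)))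
  have g1 : ∀ m : Fin n, _ := fun m => abs_add_le' (abs_mul_le' (h2 m i) (h1 j))
    (abs_mul_le' (h1 i) (h2 m j))
  have g0 := abs_mul_le' (h1 i) (h1 j)
  have hrr := S.ddr_abs hp hn hP hP1 hQ hT h1 h2 h3 k l
  have h := abs_add_le' (abs_add_le' (abs_mul_le' g2 hra)
    (abs_mul_le' (g1 l) (S.dr_abs hp h1 h2 k)))
    (abs_add_le' (abs_mul_le' (g1 k) (S.dr_abs hp h1 h2 l)) (abs_mul_le' g0 hrr))
  refine h.trans ?_
  have hPT : 0 ≤ P * T := mul_nonneg hP hT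
  have b1 : P * P ≤ 1 := by nlinarith
  set Z := Q ^ 2 + P * T with hZ
  have hZ0 : 0 ≤ Z := by positivity
  have b2 : P * P * Q ^ 2 ≤ Z := by
    nlinarith [mul_le_mul_of_nonneg_right b1 (sq_nonneg Q)]
  have b3 : P * P * (10 * n ^ 2 * Z) ≤ 1 * (10 * n ^ 2 * Z) :=
    mul_le_mul_of_nonneg_right b1 (by positivity)
  have b4 : (n : ℝ) * (P * P * Q ^ 2) ≤ n * Z := mul_le_mul_of_nonneg_left b2 (by positivity)
  have b5 : (n : ℝ) * Z ≤ n ^ 2 * Z := mul_le_mul_of_nonneg_right (by nlinarith) hZ0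
  have b6 : 1 * Z ≤ (n : ℝ) * Z := mul_le_mul_of_nonneg_right hN hZ0
  have e : (T * P + Q * Q + (Q * Q + P * T)) * 1 + (Q * P + P * Q) * (2 * n * (P * Q))
      + ((Q * P + P * Q) * (2 * n * (P * Q)) + P * P * (10 * n ^ 2 * Z))
      = 2 * Z + 8 * (n * (P * P * Q ^ 2)) + P * P * (10 * n ^ 2 * Z) := by
    rw [hZ]; ring
  rw [e]
  linarith

theorem Sol.Lu2_abs (S : Sol Ω u) (hp : p ∈ Ω) (hn : 1 ≤ n) (hP : 0 ≤ P) (hP1 : P ≤ 1)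
    (hQ : 0 ≤ Q) (hT : 0 ≤ T)
    (h1 : ∀ i, |dv (ex i) u p| ≤ P) (h2 : ∀ i j, |dv (ex i) (dv (ex j) u) p| ≤ Q)
    (h3 : ∀ i j k, |dv (ex i) (dv (ex j) (dv (ex k) u)) p| ≤ T) (k l : Fin n) :
    |Lop (af u p) (dv (ex k) (dv (ex l) u)) p| ≤ 28 * n ^ 4 * (Q ^ 3 + Q * T) := by
  have hN : (1 : ℝ) ≤ n := by exact_mod_cast hn
  rw [S.Lu2 hp]
  have h : ∀ i j, _ := fun i j => abs_add_le' (abs_add_le'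
    (abs_mul_le' (S.ddb_abs hp hn hP hP1 hQ hT h1 h2 h3 i j k l) (h2 i j))
    (abs_mul_le' (S.db_abs hp hn hP hP1 hQ h1 h2 i j l) (h3 k i j)))
    (abs_mul_le' (S.db_abs hp hn hP hP1 hQ h1 h2 i j k) (h3 i j l))
  have h' := abs_sum_le fun i => abs_sum_le fun j => h i j
  refine h'.trans ?_
  have hQT : 0 ≤ Q * T := mul_nonneg hQ hT
  have b0 : P * (Q * T) ≤ 1 * (Q * T) := mul_le_mul_of_nonneg_right hP1 hQT
  have b1 : (n : ℝ) ^ 2 * (P * (Q * T)) ≤ n ^ 2 * (Q * T) := by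
    apply mul_le_mul_of_nonneg_left _ (by positivity); linarith
  have b2 : (n : ℝ) * (P * (Q * T)) ≤ n ^ 2 * (Q * T) := by
    calc (n : ℝ) * (P * (Q * T)) ≤ n * (Q * T) := by
          apply mul_le_mul_of_nonneg_left _ (by positivity); linarith
      _ ≤ n ^ 2 * (Q * T) := mul_le_mul_of_nonneg_right (by nlinarith) hQT
  have hQ3 : 0 ≤ (n : ℝ) ^ 2 * Q ^ 3 := by positivity
  have e : (20 : ℝ) * n ^ 2 * (Q ^ 2 + P * T) * Q + 4 * n * (P * Q) * T + 4 * n * (P * Q) * T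
      ≤ 28 * n ^ 2 * (Q ^ 3 + Q * T) := by
    have : (20 : ℝ) * n ^ 2 * (Q ^ 2 + P * T) * Q + 4 * n * (P * Q) * T + 4 * n * (P * Q) * T
      = 20 * (n ^ 2 * Q ^ 3) + 20 * (n ^ 2 * (P * (Q * T))) + 8 * (n * (P * (Q * T))) := by ring
    rw [this]; linarith
  calc _ ≤ (n : ℝ) * (n * (28 * n ^ 2 * (Q ^ 3 + Q * T))) := by gcongr
    _ = _ := by ring

theorem Bf_nonneg : 0 ≤ Bf u p :=
  Finset.sum_nonneg fun _ _ => Finset.sum_nonneg fun _ _ => mul_self_nonneg _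

theorem Tf_nonneg : 0 ≤ Tf u p :=
  Finset.sum_nonneg fun _ _ => Finset.sum_nonneg fun _ _ => Finset.sum_nonneg fun _ _ => sq_nonneg _

theorem le_sqrt_wf (i : Fin n) : |dv (ex i) u p| ≤ √(wf u p) := by
  apply Real.abs_le_sqrt
  rw [sq]
  exact Finset.single_le_sum (f := fun i => dv (ex i) u p * dv (ex i) u p)
    (fun _ _ => mul_self_nonneg _) (Finset.mem_univ i)

theorem le_sqrt_Bf (i j : Fin n) : |dv (ex i) (dv (ex j) u) p| ≤ √(Bf u p) := by
  apply Real.abs_le_sqrt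
  rw [sq]
  refine (Finset.single_le_sum (f := fun j => dv (ex i) (dv (ex j) u) p * dv (ex i) (dv (ex j) u) p)
    (fun _ _ => mul_self_nonneg _) (Finset.mem_univ j)).trans ?_
  exact Finset.single_le_sum
    (f := fun i => ∑ j, dv (ex i) (dv (ex j) u) p * dv (ex i) (dv (ex j) u) p)
    (fun _ _ => Finset.sum_nonneg fun _ _ => mul_self_nonneg _) (Finset.mem_univ i)

theorem le_sqrt_Tf (i j k : Fin n) : |dv (ex i) (dv (ex j) (dv (ex k) u)) p| ≤ √(Tf u p) := by
  apply Real.abs_le_sqrt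
  refine (Finset.single_le_sum (f := fun i => dv (ex i) (dv (ex j) (dv (ex k) u)) p ^ 2)
    (fun _ _ => sq_nonneg _) (Finset.mem_univ i)).trans ?_
  refine (Finset.single_le_sum (f := fun k => ∑ i, dv (ex i) (dv (ex j) (dv (ex k) u)) p ^ 2)
    (fun _ _ => Finset.sum_nonneg fun _ _ => sq_nonneg _) (Finset.mem_univ k)).trans ?_
  exact Finset.single_le_sum
    (f := fun j => ∑ k, ∑ i, dv (ex i) (dv (ex j) (dv (ex k) u)) p ^ 2)
    (fun _ _ => Finset.sum_nonneg fun _ _ => Finset.sum_nonneg fun _ _ => sq_nonneg _)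
    (Finset.mem_univ j)

theorem Sol.LB (S : Sol Ω u) (hp : p ∈ Ω) :
    Lop (af u p) (Bf u) p = ∑ k, ∑ l, (2 * (dv (ex k) (dv (ex l) u) p
        * Lop (af u p) (dv (ex k) (dv (ex l) u)) p)
      + 2 * qf (af u p) (gr (dv (ex k) (dv (ex l) u)) p) (gr (dv (ex k) (dv (ex l) u)) p)) := by
  change Lop (af u p) (fun q => ∑ k, ∑ l, dv (ex k) (dv (ex l) u) q * dv (ex k) (dv (ex l) u) q) p
    = _
  rw [Lop_sum S.op (fun k => Sm.sum fun l => (S.d2 k l).mul (S.d2 k l)) hp]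
  refine Finset.sum_congr rfl fun k _ => ?_
  rw [Lop_sum S.op (fun l => (S.d2 k l).mul (S.d2 k l)) hp]
  refine Finset.sum_congr rfl fun l _ => ?_
  rw [Lop_mul S.op af_symm (S.d2 k l) (S.d2 k l) hp]
  ring

theorem Sol.LB_ge (S : Sol Ω u) (hp : p ∈ Ω) (hn : 1 ≤ n) (hw : wf u p ≤ 1) :
    1 / 2 * Tf u p - 1624 * n ^ 12 * Bf u p ^ 2 ≤ Lop (af u p) (Bf u) p := by
  have hN : (1 : ℝ) ≤ n := by exact_mod_cast hn
  have hP1 : √(wf u p) ≤ 1 := Real.sqrt_le_one.2 hw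
  have hb := S.Lu2_abs hp hn (Real.sqrt_nonneg _) hP1 (Real.sqrt_nonneg _) (Real.sqrt_nonneg _)
    le_sqrt_wf le_sqrt_Bf le_sqrt_Tf
  set Q := √(Bf u p) with hQd
  set T := √(Tf u p) with hTd
  have hQ0 : 0 ≤ Q := Real.sqrt_nonneg _
  have hT0 : 0 ≤ T := Real.sqrt_nonneg _
  have hQ2 : Bf u p = Q ^ 2 := (Real.sq_sqrt Bf_nonneg).symm
  have hT2 : Tf u p = T ^ 2 := (Real.sq_sqrt Tf_nonneg).symm
  rw [S.LB hp]
  have hr : (1 : ℝ) / 2 ≤ rf u p := by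
    have h1 := rf_mul (u := u) (p := p)
    have h2 := rf_pos (u := u) (p := p)
    nlinarith
  have hk : ∀ k l, |dv (ex k) (dv (ex l) u) p * Lop (af u p) (dv (ex k) (dv (ex l) u)) p|
      ≤ Q * (28 * n ^ 4 * (Q ^ 3 + Q * T)) := fun k l => abs_mul_le' (le_sqrt_Bf k l) (hb k l)
  have h2 := abs_sum_le fun k => abs_sum_le fun l => hk k l
  have h3 : Tf u p ≤ ∑ k, ∑ l, 2 * qf (af u p) (gr (dv (ex k) (dv (ex l) u)) p)
      (gr (dv (ex k) (dv (ex l) u)) p) := by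
    unfold Tf
    refine Finset.sum_le_sum fun k _ => Finset.sum_le_sum fun l _ => ?_
    have h4 := le_qf (u := u) (p := p) (gr (dv (ex k) (dv (ex l) u)) p)
    simp only [gr] at h4 ⊢
    have h5 : 0 ≤ ∑ i, dv (ex i) (dv (ex k) (dv (ex l) u)) p ^ 2 :=
      Finset.sum_nonneg fun _ _ => sq_nonneg _
    have := mul_le_mul_of_nonneg_right hr h5
    linarith
  simp only [Finset.sum_add_distrib, ← Finset.mul_sum] at h3 ⊢
  have h4 := (abs_le.1 h2).1
  rw [hT2] at h3 ⊢
  rw [hQ2]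
  have e1 : (n : ℝ) * (n * (Q * (28 * n ^ 4 * (Q ^ 3 + Q * T))))
      = 28 * (n ^ 6 * Q ^ 4) + 28 * (n ^ 6 * (Q ^ 2 * T)) := by ring
  rw [e1] at h4
  have e2 : (n : ℝ) ^ 6 * Q ^ 4 ≤ n ^ 12 * Q ^ 4 := by
    apply mul_le_mul_of_nonneg_right _ (by positivity)
    exact pow_le_pow_right₀ hN (by norm_num)
  have e3 : 0 ≤ (T - 56 * n ^ 6 * Q ^ 2) ^ 2 := sq_nonneg _
  have e4 : (T - 56 * (n : ℝ) ^ 6 * Q ^ 2) ^ 2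
    = T ^ 2 - 112 * (n ^ 6 * (Q ^ 2 * T)) + 3136 * (n ^ 12 * Q ^ 4) := by ring
  rw [e4] at e3
  have e5 : (1624 : ℝ) * n ^ 12 * (Q ^ 2) ^ 2 = 1624 * (n ^ 12 * Q ^ 4) := by ring
  rw [e5]
  linarith

end hess

/-! ### Interior Hessian estimate -/

/-- The small constant in the Hessian estimate. -/
noncomputable def muc (n : ℕ) : ℝ := 1 / (8 * (1624 * (n : ℝ) ^ 12))

section hess2

variable {n : ℕ} {Ω : Set (SpT n)} {u : SpT n → ℝ} {p : SpT n}

theorem muc_pos (hn : 1 ≤ n) : 0 < muc n := by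
  have hN : (1 : ℝ) ≤ n := by exact_mod_cast hn
  unfold muc; positivity

theorem muc_mul (hn : 1 ≤ n) : muc n * (1624 * (n : ℝ) ^ 12) = 1 / 8 := by
  have hN : (1 : ℝ) ≤ n := by exact_mod_cast hn
  unfold muc; field_simp

theorem muc_le (hn : 1 ≤ n) : 8 * muc n ≤ 1 := by
  have hN : (1 : ℝ) ≤ n := by exact_mod_cast hn
  have h1 : (1 : ℝ) ≤ n ^ 12 := one_le_pow₀ hN
  have h2 := muc_mul hn
  have h3 := muc_pos hn
  nlinarith

theorem Sol.gB_le (S : Sol Ω u) (hp : p ∈ Ω) :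
    qf (af u p) (gr (Bf u) p) (gr (Bf u) p) ≤ 4 * Bf u p * Tf u p := by
  refine (qf_le _).trans ?_
  have e : ∀ i, gr (Bf u) p i = 2 * ∑ q : Fin n × Fin n, dv (ex q.1) (dv (ex q.2) u) p
      * dv (ex i) (dv (ex q.1) (dv (ex q.2) u)) p := by
    intro i
    rw [Fintype.sum_prod_type]
    unfold gr
    change dv (ex i) (fun q => ∑ k, ∑ l, dv (ex k) (dv (ex l) u) q * dv (ex k) (dv (ex l) u) q) p = _
    rw [dv_sum S.op (fun k => Sm.sum fun l => (S.d2 k l).mul (S.d2 k l)) hp, Finset.mul_sum]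
    refine Finset.sum_congr rfl fun k _ => ?_
    rw [dv_sum S.op (fun l => (S.d2 k l).mul (S.d2 k l)) hp, Finset.mul_sum]
    refine Finset.sum_congr rfl fun l _ => ?_
    rw [dv_mul S.op (S.d2 k l) (S.d2 k l) hp]; ring
  have hB : Bf u p = ∑ q : Fin n × Fin n, dv (ex q.1) (dv (ex q.2) u) p ^ 2 := by
    rw [Fintype.sum_prod_type]; simp only [sq]; rfl
  have hT : Tf u p = ∑ i, ∑ q : Fin n × Fin n, dv (ex i) (dv (ex q.1) (dv (ex q.2) u)) p ^ 2 := by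
    simp only [Fintype.sum_prod_type]
    unfold Tf
    conv_rhs => rw [Finset.sum_comm]
    refine Finset.sum_congr rfl fun k _ => ?_
    rw [Finset.sum_comm]
  rw [hT, Finset.mul_sum]
  refine Finset.sum_le_sum fun i _ => ?_
  rw [e i, hB]
  have := Finset.sum_mul_sq_le_sq_mul_sq Finset.univ
    (fun q : Fin n × Fin n => dv (ex q.1) (dv (ex q.2) u) p)
    (fun q => dv (ex i) (dv (ex q.1) (dv (ex q.2) u)) p)
  rw [mul_pow]
  linarith

theorem Sol.gw_le2 (S : Sol Ω u) (hp : p ∈ Ω) :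
    qf (af u p) (gr (wf u) p) (gr (wf u) p) ≤ 4 * wf u p * Bf u p := by
  refine (qf_le _).trans ?_
  have hw : wf u p = ∑ i, dv (ex i) u p ^ 2 := by unfold wf; simp only [sq]
  unfold Bf
  rw [Finset.mul_sum]
  refine Finset.sum_le_sum fun i _ => ?_
  have := Finset.sum_mul_sq_le_sq_mul_sq Finset.univ (fun k => dv (ex k) u p)
    (fun k => dv (ex i) (dv (ex k) u) p)
  rw [← hw] at this
  simp only [gr, S.dw hp, mul_pow, ← sq]
  linarith

theorem Sol.LY_ge (S : Sol Ω u) (hp : p ∈ Ω) (hn : 1 ≤ n) (hw : wf u p ≤ muc n / 128)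
    (hB : 0 < Bf u p) :
    1 / 2 * Bf u p ^ 2 ≤ Lop (af u p) (fun q => Bf u q * (muc n + wf u q)) p := by
  have hmp := muc_pos hn
  have hml := muc_le hn
  have hmm := muc_mul hn
  have hw0 := wf_nonneg (u := u) (p := p)
  have hT0 := Tf_nonneg (u := u) (p := p)
  have hLB := S.LB_ge hp hn (by linarith)
  have hgB := S.gB_le hp
  have hgw := S.gw_le2 hp
  have hLw : Bf u p ≤ Lop (af u p) (wf u) p := by
    rw [S.Lw hp]
    have h1 := Bw_le (u := u) (p := p)
    have h2 := qf_nonneg (u := u) (p := p) (gr (wf u) p)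
    have h3 := rf_mul (u := u) (p := p)
    have h4 := rf_pos (u := u) (p := p)
    have h5 : 1 / 2 ≤ rf u p := by nlinarith
    have h6 := mul_nonneg h4.le h2
    have h7 := mul_le_mul_of_nonneg_right h5 hB.le
    linarith
  have gW : gr (fun q => muc n + wf u q) p = gr (wf u) p := by
    rw [gr_add S.op (Sm.const _) S.w hp, gr_const, zero_add]
  have LW : Lop (af u p) (fun q => muc n + wf u q) p = Lop (af u p) (wf u) p := by
    rw [Lop_add S.op (Sm.const _) S.w hp, Lop_const, zero_add]
  rw [Lop_mul S.op af_symm S.B ((Sm.const _).add S.w) hp, gW, LW]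
  have hy := qf_young (a := af u p) af_symm qf_nonneg (muc n) (8 * Bf u p)
      (gr (Bf u) p) (gr (wf u) p)
  generalize Lop (af u p) (Bf u) p = LB at *
  generalize Lop (af u p) (wf u) p = LWW at *
  generalize qf (af u p) (gr (Bf u) p) (gr (wf u) p) = G at *
  generalize qf (af u p) (gr (Bf u) p) (gr (Bf u) p) = GB at *
  generalize qf (af u p) (gr (wf u) p) (gr (wf u) p) = GW at *
  generalize Bf u p = B at *
  generalize wf u p = w at *
  generalize Tf u p = T at *
  generalize muc n = m at *
  generalize (1624 * (n : ℝ) ^ 12) = c at *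
  -- the mixed term
  have k1 : -(m / 2 * T) - 1 / 4 * B ^ 2 ≤ 2 * G := by
    have h1 : m ^ 2 * GB ≤ m ^ 2 * (4 * B * T) := mul_le_mul_of_nonneg_left hgB (sq_nonneg _)
    have h2 : (8 * B) ^ 2 * GW ≤ (8 * B) ^ 2 * (4 * w * B) :=
      mul_le_mul_of_nonneg_left hgw (sq_nonneg _)
    have h3 : (256 * B ^ 3) * w ≤ (256 * B ^ 3) * (m / 128) :=
      mul_le_mul_of_nonneg_left hw (by positivity)
    have h4 : 0 ≤ (8 * m * B) * (2 * G + (m / 2 * T) + 1 / 4 * B ^ 2) := by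
      linear_combination hy + h1 + h2 + h3
    have := nonneg_of_mul_nonneg_right h4 (by positivity)
    linarith
  have k2 : (m + w) * (1 / 2 * T - c * B ^ 2) ≤ (m + w) * LB :=
    mul_le_mul_of_nonneg_left hLB (by linarith)
  have k3 : B * B ≤ B * LWW := mul_le_mul_of_nonneg_left hLw hB.le
  have hc0 : 0 ≤ c := by
    by_contra h
    push Not at h
    nlinarith
  have k4 : (m + w) * c ≤ 1 / 4 := by
    have : w * c ≤ m * c := mul_le_mul_of_nonneg_right (by linarith) hc0
    linarith
  have k5 : (m + w) * c * B ^ 2 ≤ 1 / 4 * B ^ 2 := mul_le_mul_of_nonneg_right k4 (sq_nonneg _)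
  have k6 : 0 ≤ w * T := mul_nonneg hw0 hT0
  linear_combination k1 + k2 + k3 + k5 + 1 / 2 * k6

end hess2

theorem alg_hess {t z Y B tr X G LY m R N D : ℝ} (ht : 0 < t) (htD : t ≤ D) (hz : 0 < z)
    (hzR : z ≤ R ^ 2) (hY : 0 < Y) (hYB : Y ≤ 2 * m * B) (hm : 0 < m)
    (htr : z * tr ≤ R ^ 2 * N) (hX : X ≤ 4 * R ^ 2) (hN : 0 ≤ N)
    (hLY : 1 / 2 * B ^ 2 ≤ LY) (hG : z * G = -2 * Y * X)
    (hM : 8 * m ^ 2 * (R ^ 4 + D * ((4 * N + 24) * R ^ 2)) < t * (z * z * Y))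
    (hL : t * (z * z * LY + Y * (z * (-2 * tr) + z * (-2 * tr) + 2 * X) + 2 * (2 * z * G))
      + z * z * Y * -1 + 2 * 0 ≤ 0) : False := by
  set q := t * (z * z * Y) with hq
  have hq0 : 0 < q := by positivity
  have a1 : Y * (z * tr) ≤ Y * (R ^ 2 * N) := mul_le_mul_of_nonneg_left htr hY.le
  have a2 : Y * X ≤ Y * (4 * R ^ 2) := mul_le_mul_of_nonneg_left hX hY.le
  have a3 : z * z * (1 / 2 * B ^ 2) ≤ z * z * LY := mul_le_mul_of_nonneg_left hLY (by positivity)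
  have a4 : z * z * (1 / 2 * B ^ 2) - Y * ((4 * N + 24) * R ^ 2)
    ≤ z * z * LY + Y * (z * (-2 * tr) + z * (-2 * tr) + 2 * X) + 2 * (2 * z * G) := by
    linear_combination a3 + 4 * a1 + 6 * a2 - 4 * hG
  have a5 := mul_le_mul_of_nonneg_left a4 ht.le
  have a6 : t * (z * z * (1 / 2 * B ^ 2)) ≤ Y * (t * ((4 * N + 24) * R ^ 2) + z * z) := by
    linear_combination a5 + hL
  have a7 : t * ((4 * N + 24) * R ^ 2) + z * z ≤ R ^ 4 + D * ((4 * N + 24) * R ^ 2) := by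
    have h1 : t * ((4 * N + 24) * R ^ 2) ≤ D * ((4 * N + 24) * R ^ 2) :=
      mul_le_mul_of_nonneg_right htD (by positivity)
    have h2 : z * z ≤ R ^ 2 * R ^ 2 := mul_le_mul hzR hzR hz.le (sq_nonneg _)
    have h3 : R ^ 2 * R ^ 2 = R ^ 4 := by ring
    linarith
  have a8 := mul_le_mul_of_nonneg_left a7 hY.le
  have a9 : t * (z * z * (1 / 2 * B ^ 2)) ≤ Y * (R ^ 4 + D * ((4 * N + 24) * R ^ 2)) := a6.trans a8
  have b1 : Y ^ 2 ≤ (2 * m * B) ^ 2 := pow_le_pow_left₀ hY.le hYB 2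
  have b2 : (t * (z * z)) ^ 2 * Y ^ 2 ≤ (t * (z * z)) ^ 2 * (2 * m * B) ^ 2 :=
    mul_le_mul_of_nonneg_left b1 (sq_nonneg _)
  have b3 := mul_le_mul_of_nonneg_left a9 (by positivity : 0 ≤ 8 * m ^ 2 * (t * (z * z)))
  have b4 := mul_lt_mul_of_pos_left hM hq0
  have : q * q < q * q := by
    have e1 : q * q = (t * (z * z)) ^ 2 * Y ^ 2 := by rw [hq]; ring
    have e2 : q * (8 * m ^ 2 * (R ^ 4 + D * ((4 * N + 24) * R ^ 2)))
      = 8 * m ^ 2 * (t * (z * z)) * (Y * (R ^ 4 + D * ((4 * N + 24) * R ^ 2))) := by rw [hq]; ring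
    have e3 : (t * (z * z)) ^ 2 * (2 * m * B) ^ 2
      = 8 * m ^ 2 * (t * (z * z)) * (t * (z * z * (1 / 2 * B ^ 2))) := by ring
    calc q * q = (t * (z * z)) ^ 2 * Y ^ 2 := e1
      _ ≤ (t * (z * z)) ^ 2 * (2 * m * B) ^ 2 := b2
      _ = _ := e3
      _ ≤ _ := b3
      _ = _ := e2.symm
      _ < q * q := b4
  exact lt_irrefl _ this

set_option maxHeartbeats 1000000 in
theorem hess_int {n : ℕ} {Ω : Set (SpT n)} {u : SpT n → ℝ} (S : Sol Ω u) (hn : 1 ≤ n)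
    {s T R : ℝ} {x₀ : EuclideanSpace ℝ (Fin n)}
    (hR : 0 < R) (hsT : s ≤ T)
    (hsub : Set.Icc s T ×ˢ Metric.closedBall x₀ R ⊆ Ω)
    (h0 : ∀ t ∈ Set.Icc s T, ∀ x ∈ Metric.closedBall x₀ R, wf u (t, x) ≤ muc n / 128) :
    (T - s) * R ^ 4 * Bf u (T, x₀) ≤ R ^ 4 + (T - s) * ((4 * n + 24) * R ^ 2) := by
  have hmp := muc_pos hn
  have hml := muc_le hn
  have hTs : 0 ≤ T - s := by linarith
  have sz2 : Sm Ω (fun q => zf x₀ R q * zf x₀ R q) := zf_sm.mul zf_sm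
  have sY : Sm Ω (fun q => Bf u q * (muc n + wf u q)) := S.B.mul ((Sm.const _).add S.w)
  have szY : Sm Ω (fun q => (zf x₀ R q * zf x₀ R q) * (Bf u q * (muc n + wf u q))) := sz2.mul sY
  have hM0 : 0 ≤ 8 * muc n ^ 2 * (R ^ 4 + (T - s) * ((4 * n + 24) * R ^ 2)) := by positivity
  have hm := maxp S.op
    (Q := fun q => tf s q * ((zf x₀ R q * zf x₀ R q) * (Bf u q * (muc n + wf u q))))
    (tf_sm.mul szY) (M := 8 * muc n ^ 2 * (R ^ 4 + (T - s) * ((4 * n + 24) * R ^ 2)))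
    hsub ?_ ?_ ?_ (T, x₀)
    ⟨⟨hsT, le_refl _⟩, Metric.mem_closedBall_self hR.le⟩
  · simp only [zf_eq, tf, dist_self] at hm
    have hB := Bf_nonneg (u := u) (p := (T, x₀))
    have hw := wf_nonneg (u := u) (p := (T, x₀))
    have h1 : 0 ≤ (T - s) * R ^ 4 * Bf u (T, x₀) * wf u (T, x₀) := by positivity
    have h2 : muc n * ((T - s) * R ^ 4 * Bf u (T, x₀))
        ≤ muc n * (8 * muc n * (R ^ 4 + (T - s) * ((4 * n + 24) * R ^ 2))) := by
      linear_combination hm + h1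
    have h3 := le_of_mul_le_mul_left h2 hmp
    have h4 : 8 * muc n * (R ^ 4 + (T - s) * ((4 * n + 24) * R ^ 2))
        ≤ 1 * (R ^ 4 + (T - s) * ((4 * n + 24) * R ^ 2)) :=
      mul_le_mul_of_nonneg_right hml (by positivity)
    linarith
  · intro x hx
    simp only [tf]; linarith
  · intro t ht x hx
    simp only [zf_eq, hx]; linarith
  · intro p hp hp1 hp2 hp3 hM hg hLop
    have hpt : p.1 ∈ Set.Icc s T := ⟨hp1.le, hp2⟩
    have hpx : p.2 ∈ Metric.closedBall x₀ R := by simpa using hp3.le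
    have hw : wf u p ≤ muc n / 128 := h0 p.1 hpt p.2 hpx
    have hw0 := wf_nonneg (u := u) (p := p)
    have hB0 : 0 < Bf u p := by
      rcases (Bf_nonneg (u := u) (p := p)).lt_or_eq with h | h
      · exact h
      · exfalso
        simp only [← h] at hM
        linarith
    have hz0 := zf_pos (x₀ := x₀) (R := R) (p := p) hp3
    have hzR := zf_le (x₀ := x₀) (R := R) (p := p)
    have ht0 : 0 < tf s p := by simp only [tf]; linarith
    have ht1 : tf s p ≤ T - s := by simp only [tf]; linarith
    have hL := hLop (af u p) af_symm qf_nonneg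
    have gz2 : gr (fun q => zf x₀ R q * zf x₀ R q) p = (2 * zf x₀ R p) • gr (zf x₀ R) p := by
      rw [gr_mul S.op zf_sm zf_sm hp, ← add_smul]; ring_nf
    rw [gr_mul S.op tf_sm szY hp, gr_tf, gr_mul S.op sz2 sY hp, gz2] at hg
    rw [Lop_mul S.op af_symm tf_sm szY hp, gr_tf, qf_zero_left, Lop_tf,
      Lop_mul S.op af_symm sz2 sY hp, Lop_mul S.op af_symm zf_sm zf_sm hp, gz2, qf_smul_left,
      Lop_zf af_symm] at hL
    have hLY := S.LY_ge hp hn hw hB0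
    have hzz := qf_zf_le (u := u) (x₀ := x₀) (R := R) (p := p) hp3.le
    have htr := trace_le (u := u) (p := p)
    have htr0 := trace_nonneg (u := u) (p := p)
    have hg' : zf x₀ R p • gr (fun q => Bf u q * (muc n + wf u q)) p
        = (-2 * (Bf u p * (muc n + wf u p))) • gr (zf x₀ R) p := by
      ext i
      have := congrFun hg i
      simp only [Pi.add_apply, Pi.smul_apply, smul_eq_mul, Pi.zero_apply, mul_zero, zero_add] at this ⊢
      have h3 : (tf s p * zf x₀ R p) * (zf x₀ R p * gr (fun q => Bf u q * (muc n + wf u q)) p i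
        - -2 * (Bf u p * (muc n + wf u p)) * gr (zf x₀ R) p i) = 0 := by
        linear_combination this
      rcases mul_eq_zero.1 h3 with h4 | h4
      · exact absurd h4 (by positivity)
      · linarith
    have q1 : zf x₀ R p * qf (af u p) (gr (zf x₀ R) p) (gr (fun q => Bf u q * (muc n + wf u q)) p)
        = -2 * (Bf u p * (muc n + wf u p)) * qf (af u p) (gr (zf x₀ R) p) (gr (zf x₀ R) p) := by
      rw [← qf_smul_right, hg', qf_smul_right]
    refine alg_hess (m := muc n) (B := Bf u p) (N := n) ht0 ht1 hz0 hzR ?_ ?_ hmp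
      (mul_le_mul hzR htr htr0 (by positivity)) hzz (by positivity) hLY q1 hM hL
    · positivity
    · have : Bf u p * (muc n + wf u p) ≤ Bf u p * (2 * muc n) :=
        mul_le_mul_of_nonneg_left (by linarith) hB0.le
      linarith

/-! ### Chaining the estimates -/

/-- Height constant. -/
noncomputable def Chc (n : ℕ) : ℝ := 256 * n + 130

/-- Hessian constant. -/
noncomputable def C3c (n : ℕ) : ℝ := 2 + 64 * (4 * n + 24)

/-- Gradient constant. -/
noncomputable def C2c (n : ℕ) : ℝ := C3c n * Chc n ^ 2

/-- First time scale. -/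
noncomputable def s1c (n : ℕ) : ℝ := 1 / (128 * (2 * n + 1))

theorem Chc_pos (n : ℕ) : 1 ≤ Chc n := by
  unfold Chc; have : (0 : ℝ) ≤ n := by positivity
  linarith

theorem C3c_pos (n : ℕ) : 1 ≤ C3c n := by
  unfold C3c; have : (0 : ℝ) ≤ n := by positivity
  linarith

theorem C2c_pos (n : ℕ) : 1 ≤ C2c n := by
  unfold C2c
  have h1 := C3c_pos n
  have h2 := Chc_pos n
  nlinarith

theorem s1c_pos (n : ℕ) : 0 < s1c n := by unfold s1c; positivity

theorem s1c_mul (n : ℕ) : (2 * n + 1) * s1c n = 1 / 128 := by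
  unfold s1c; field_simp

theorem s1c_le (n : ℕ) : s1c n ≤ 1 := by
  have h := s1c_mul n
  have h2 := s1c_pos n
  have : (0 : ℝ) ≤ n := by positivity
  nlinarith

theorem alg_gs {D ρ w K c N : ℝ} (hD : 0 < D) (hρ : 0 < ρ) (hDρ : D ≤ ρ ^ 2) (hN : 0 ≤ N)
    (hK : 0 ≤ K)
    (h : (D / 2) * (ρ / 8) ^ 4 * w
      ≤ (1 + K) * ((ρ / 8) ^ 4 + (D / 2) * ((4 * N + 24) * (ρ / 8) ^ 2)) * (c * (D / ρ)) ^ 2) :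
    w ≤ (1 + K) * ((2 + 64 * (4 * N + 24)) * c ^ 2) * (D / ρ ^ 2) := by
  obtain ⟨d, rfl⟩ : ∃ d, D = d * ρ ^ 2 := ⟨D / ρ ^ 2, by field_simp⟩
  have hd : 0 < d := by
    by_contra hcon
    push Not at hcon
    nlinarith [sq_nonneg ρ]
  have hd1 : d ≤ 1 := by
    by_contra hcon
    push Not at hcon
    nlinarith [sq_pos_of_pos hρ]
  have e1 : d * ρ ^ 2 / ρ ^ 2 = d := by field_simp
  have e2 : d * ρ ^ 2 / ρ = d * ρ := by field_simp
  rw [e1]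
  rw [e2] at h
  have h1 : (d * ρ ^ 6) * w
      ≤ (d * ρ ^ 6) * ((1 + K) * ((2 + 64 * (4 * N + 24) * d) * c ^ 2) * d) := by
    linear_combination 8192 * h
  have h2 := le_of_mul_le_mul_left h1 (by positivity)
  refine h2.trans ?_
  have : 64 * (4 * N + 24) * d ≤ 64 * (4 * N + 24) := by
    nlinarith
  gcongr

theorem alg_hs {D ρ B N : ℝ} (hD : 0 < D) (hρ : 0 < ρ) (hDρ : D ≤ ρ ^ 2) (hN : 0 ≤ N)
    (h : (D / 2) * (ρ / 8) ^ 4 * B ≤ (ρ / 8) ^ 4 + (D / 2) * ((4 * N + 24) * (ρ / 8) ^ 2)) :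
    D * B ≤ 2 + 64 * (4 * N + 24) := by
  have h1 : ρ ^ 4 * (D * B) ≤ ρ ^ 4 * 2 + 64 * (4 * N + 24) * (ρ ^ 2 * D) := by
    linear_combination 8192 * h
  have h2 : 64 * (4 * N + 24) * (ρ ^ 2 * D) ≤ 64 * (4 * N + 24) * (ρ ^ 2 * ρ ^ 2) := by gcongr
  have h3 : ρ ^ 4 * (D * B) ≤ ρ ^ 4 * (2 + 64 * (4 * N + 24)) := by linear_combination h1 + h2
  exact le_of_mul_le_mul_left h3 (by positivity)

/-- Subsets of the space-time cylinder. -/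
theorem box_sub {n : ℕ} {t₁ t₂ ρ s t r : ℝ} {a₀ x : EuclideanSpace ℝ (Fin n)} (hs : t₁ < s)
    (ht : t < t₂) (hr : r + ρ / 8 < 2 * ρ) (hx : x ∈ Metric.closedBall a₀ r) :
    Set.Icc s t ×ˢ Metric.closedBall x (ρ / 8) ⊆ Set.Ioo t₁ t₂ ×ˢ Metric.ball a₀ (2 * ρ) := by
  rintro ⟨t', y⟩ ⟨ht', hy⟩
  refine ⟨⟨hs.trans_le ht'.1, ht'.2.trans_lt ht⟩, ?_⟩
  simp only [Metric.mem_closedBall, Metric.mem_ball] at *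
  linarith [dist_triangle y x a₀]

theorem cb_sub {n : ℕ} {ρ r r' : ℝ} {a₀ x : EuclideanSpace ℝ (Fin n)}
    (hr : r + ρ / 8 ≤ r') (hx : x ∈ Metric.closedBall a₀ r) :
    Metric.closedBall x (ρ / 8) ⊆ Metric.closedBall a₀ r' := by
  intro y hy
  simp only [Metric.mem_closedBall] at *
  linarith [dist_triangle y x a₀]

/-- One step of gradient improvement. -/
theorem grad_step {n : ℕ} {t₁ t₂ ρ l K r r' : ℝ} {a₀ : EuclideanSpace ℝ (Fin n)} {u : SpT n → ℝ}
    (S : Sol (Set.Ioo t₁ t₂ ×ˢ Metric.ball a₀ (2 * ρ)) u) (hρ : 0 < ρ) (hl : 0 < l) (hK : 0 ≤ K)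
    (hr : r + ρ / 8 ≤ r') (hr' : r' < 2 * ρ)
    (hu : ∀ t, l ≤ t - t₁ → t < t₂ → ∀ x ∈ Metric.closedBall a₀ r',
      |u (t, x)| ≤ Chc n * ((t - t₁) / ρ))
    (hw : ∀ t, l ≤ t - t₁ → t - t₁ ≤ s1c n * ρ ^ 2 → t < t₂ → ∀ x ∈ Metric.closedBall a₀ r',
      wf u (t, x) ≤ K) :
    ∀ t, 2 * l ≤ t - t₁ → t - t₁ ≤ s1c n * ρ ^ 2 → t < t₂ → ∀ x ∈ Metric.closedBall a₀ r,
      wf u (t, x) ≤ (1 + K) * C2c n * ((t - t₁) / ρ ^ 2) := by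
  intro t h1 h2 h3 x hx
  have hD : 0 < t - t₁ := by linarith
  have hDρ : t - t₁ ≤ ρ ^ 2 := by
    nlinarith [mul_le_mul_of_nonneg_right (s1c_le n) (sq_nonneg ρ)]
  have hs : (t₁ + t) / 2 ≤ t := by linarith
  have hC := Chc_pos n
  have h := grad_int S (s := (t₁ + t) / 2) (T := t) (R := ρ / 8) (K := K) (x₀ := x)
    (H := Chc n * ((t - t₁) / ρ)) (by positivity) hK hs
    (box_sub (by linarith) h3 (by linarith) hx)
    (fun t' ht' y hy => hw t' (by linarith [ht'.1]) (by linarith [ht'.2]) (by linarith [ht'.2]) y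
      (cb_sub hr hx hy))
    (fun t' ht' y hy => (hu t' (by linarith [ht'.1]) (by linarith [ht'.2]) y
      (cb_sub hr hx hy)).trans (by
        have : t' - t₁ ≤ t - t₁ := by linarith [ht'.2]
        gcongr))
  have e : t - (t₁ + t) / 2 = (t - t₁) / 2 := by ring
  rw [e] at h
  exact alg_gs hD hρ hDρ (by positivity) hK h

theorem core {n : ℕ} (hn : 1 ≤ n) {t₁ t₂ ρ lam Λ τ s : ℝ} {a₀ : EuclideanSpace ℝ (Fin n)}
    {u : SpT n → ℝ}
    (S : Sol (Set.Ioo t₁ t₂ ×ˢ Metric.ball a₀ (2 * ρ)) u) (hρ : 0 < ρ) (hlam : 0 < lam)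
    (hΛ : 0 ≤ Λ) (hτ0 : 0 < τ) (hτ1 : τ ≤ s1c n) (hτ2 : (1 + 8 * (1 + Λ)) * C2c n * τ ≤ 1)
    (hτl : 2 * lam ^ 2 ≤ τ)
    (hs : t₁ < s) (hs2 : s < t₂) (hsl : s - t₁ ≤ lam ^ 2 * ρ ^ 2)
    (hb : ∀ t ∈ Set.Ioo t₁ t₂, ∀ x ∈ Metric.ball a₀ (2 * ρ), |u (t, x)| < 2 * ρ)
    (hi : ∀ x ∈ Metric.closedBall a₀ (15 / 8 * ρ), |u (s, x)| ≤ 2 * lam ^ 2 * ρ)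
    (hg : ∀ x ∈ Metric.closedBall a₀ (15 / 8 * ρ), wf u (s, x) ≤ Λ) :
    ∀ t, 8 * lam ^ 2 * ρ ^ 2 ≤ t - t₁ → t - t₁ ≤ s1c n * ρ ^ 2 →
      17 * C2c n * (t - t₁) ≤ muc n / 128 * ρ ^ 2 → t < t₂ →
      ∀ x ∈ Metric.ball a₀ ρ,
      |u (t, x)| ≤ Chc n * ((t - t₁) / ρ) ∧ wf u (t, x) ≤ 17 * C2c n * ((t - t₁) / ρ ^ 2)
        ∧ (t - t₁) * Bf u (t, x) ≤ C3c n := by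
  set l := lam ^ 2 * ρ ^ 2 with hl
  have hlp : 0 < l := by positivity
  have hC := Chc_pos n
  have hC2 := C2c_pos n
  have hnn : (0 : ℝ) ≤ n := by positivity
  -- height
  have A1 : ∀ t, l ≤ t - t₁ → t < t₂ → ∀ x ∈ Metric.closedBall a₀ (14 / 8 * ρ),
      |u (t, x)| ≤ Chc n * ((t - t₁) / ρ) := by
    intro t ht1 ht2 x hx
    have hst : s ≤ t := by linarith
    have hbox := box_sub (n := n) (ρ := ρ) hs ht2 (by linarith) hx
    have hcb := cb_sub (n := n) (ρ := ρ) (r' := 15 / 8 * ρ) (by linarith) hx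
    have fin : 2 * lam ^ 2 * ρ + (2 * n + 1) * (2 * ρ) / (ρ / 8) ^ 2 * (t - s)
        ≤ Chc n * ((t - t₁) / ρ) := by
      have e1 : 2 * lam ^ 2 * ρ + (2 * n + 1) * (2 * ρ) / (ρ / 8) ^ 2 * (t - s)
          = (2 * l + 128 * (2 * n + 1) * (t - s)) / ρ := by
        rw [hl]; field_simp; ring
      rw [e1, ← mul_div_assoc]
      gcongr
      unfold Chc
      nlinarith
    have hLn : ∀ p ∈ Set.Ioo t₁ t₂ ×ˢ Metric.ball a₀ (2 * ρ),
        Lop (af u p) (fun q => (-1) * u q) p = 0 := by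
      intro p hp
      rw [Lop_mul S.op af_symm (Sm.const (-1)) S.sm hp, Lop_const, gr_const, qf_zero_left, S.Lu hp]
      ring
    rw [abs_le']
    constructor
    · refine (height_est S S.sm (fun p hp => S.Lu hp) (R := ρ / 8) (H₀ := 2 * lam ^ 2 * ρ)
        (H₁ := 2 * ρ) (by positivity) (by positivity) (by positivity) hst hbox
        (fun y hy => (le_abs_self _).trans (hi y (hcb hy)))
        (fun t' ht' y hy => (le_abs_self _).trans ?_)).trans fin
      have := hbox (Set.mk_mem_prod ht' hy)
      exact (hb t' this.1 y this.2).le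
    · have := (height_est S ((Sm.const (-1)).mul S.sm) hLn (R := ρ / 8) (H₀ := 2 * lam ^ 2 * ρ)
        (H₁ := 2 * ρ) (by positivity) (by positivity) (by positivity) hst hbox
        (fun y hy => ?_) (fun t' ht' y hy => ?_)).trans fin
      · linarith
      · have := (neg_abs_le _).trans' (neg_le_neg (hi y (hcb hy)))
        linarith
      · have h1 := hbox (Set.mk_mem_prod ht' hy)
        have := (neg_abs_le _).trans' (neg_le_neg (hb t' h1.1 y h1.2).le)
        linarith
  -- preservation helper
  have pres : ∀ {s' t : ℝ} {K r : ℝ} {x : EuclideanSpace ℝ (Fin n)}, t₁ < s' → s' ≤ t → t < t₂ →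
      t - t₁ ≤ s1c n * ρ ^ 2 → r + ρ / 8 < 2 * ρ → 0 ≤ K → x ∈ Metric.closedBall a₀ r →
      (∀ y ∈ Metric.closedBall x (ρ / 8), wf u (s', y) ≤ K) → wf u (t, x) ≤ 8 * (1 + K) := by
    intro s' t K r x g1 g2 g3 g4 g5 g6 g7 g8
    refine grad_pres S (R := ρ / 8) (by positivity) g6 g2 ?_ (box_sub g1 g3 g5 g7) g8
    have h1 : (2 * (n : ℝ) + 1) * (t - s') ≤ (2 * n + 1) * (s1c n * ρ ^ 2) := by
      apply mul_le_mul_of_nonneg_left _ (by positivity)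
      linarith
    have h2 := s1c_mul n
    have h3 : (2 * (n : ℝ) + 1) * (s1c n * ρ ^ 2) = 1 / 128 * ρ ^ 2 := by
      rw [← mul_assoc, h2]
    linarith
  have A2 : ∀ t, l ≤ t - t₁ → t - t₁ ≤ s1c n * ρ ^ 2 → t < t₂ →
      ∀ x ∈ Metric.closedBall a₀ (14 / 8 * ρ), wf u (t, x) ≤ 8 * (1 + Λ) := by
    intro t h1 h2 h3 x hx
    exact pres hs (by linarith) h3 h2 (by linarith) hΛ hx
      (fun y hy => hg y (cb_sub (by linarith) hx hy))
  have A3 := grad_step S hρ hlp (by positivity) (r := 13 / 8 * ρ) (r' := 14 / 8 * ρ) (by linarith)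
    (by linarith) A1 A2
  have A4 : ∀ t, 2 * l ≤ t - t₁ → t - t₁ ≤ τ * ρ ^ 2 → t < t₂ →
      ∀ x ∈ Metric.closedBall a₀ (13 / 8 * ρ), wf u (t, x) ≤ 1 := by
    intro t h1 h2 h3 x hx
    have hle : τ * ρ ^ 2 ≤ s1c n * ρ ^ 2 := by gcongr
    refine (A3 t h1 (h2.trans hle) h3 x hx).trans ?_
    have : (t - t₁) / ρ ^ 2 ≤ τ := by rw [div_le_iff₀ (by positivity)]; exact h2
    refine le_trans ?_ hτ2
    gcongr
  have hlτ : 2 * l ≤ τ * ρ ^ 2 := by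
    have := mul_le_mul_of_nonneg_right hτl (sq_nonneg ρ)
    rw [hl]; linarith
  have A5 : ∀ t, 2 * l ≤ t - t₁ → t - t₁ ≤ s1c n * ρ ^ 2 → t < t₂ →
      ∀ x ∈ Metric.closedBall a₀ (12 / 8 * ρ), wf u (t, x) ≤ 16 := by
    intro t h1 h2 h3 x hx
    rcases le_total (t - t₁) (τ * ρ ^ 2) with h | h
    · exact (A4 t h1 h h3 x (Metric.closedBall_subset_closedBall (by linarith) hx)).trans
        (by norm_num)
    · have hp : 0 < τ * ρ ^ 2 := by positivity
      have := pres (s' := t₁ + τ * ρ ^ 2) (K := 1) (by linarith) (by linarith) h3 h2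
        (by linarith) zero_le_one hx
        (fun y hy => A4 _ (by linarith) (by linarith) (by linarith) y
          (cb_sub (by linarith) hx hy))
      linarith
  have A6 := grad_step S hρ (by positivity : 0 < 2 * l) (by norm_num : (0 : ℝ) ≤ 16)
    (r := 11 / 8 * ρ) (r' := 12 / 8 * ρ) (by linarith) (by linarith)
    (fun t h1 h3 x hx => A1 t (by linarith) h3 x
      (Metric.closedBall_subset_closedBall (by linarith) hx)) A5
  intro t h1 h2 h4 h3 x hx
  have h1' : 8 * l ≤ t - t₁ := by rw [hl]; linarith
  have hx' : x ∈ Metric.closedBall a₀ ρ := Metric.ball_subset_closedBall hx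
  have e17 : (1 : ℝ) + 16 = 17 := by norm_num
  rw [e17] at A6
  refine ⟨A1 t (by linarith) h3 x (Metric.closedBall_subset_closedBall (by linarith) hx'),
    A6 t (by linarith) h2 h3 x (Metric.closedBall_subset_closedBall (by linarith) hx'), ?_⟩
  have hD : 0 < t - t₁ := by linarith
  have hDρ : t - t₁ ≤ ρ ^ 2 := by
    nlinarith [mul_le_mul_of_nonneg_right (s1c_le n) (sq_nonneg ρ)]
  have h := hess_int S hn (s := (t₁ + t) / 2) (T := t) (R := ρ / 8) (x₀ := x) (by positivity)
    (by linarith) (box_sub (by linarith) h3 (by linarith) hx')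
    (fun t' ht' y hy => by
      have q1 : t' - t₁ ≤ t - t₁ := by linarith [ht'.2]
      refine (A6 t' (by linarith [ht'.1]) (by linarith) (by linarith [ht'.2]) y
        (cb_sub (by linarith) hx' hy)).trans ?_
      rw [← mul_div_assoc, div_le_iff₀ (by positivity)]
      refine le_trans ?_ h4
      gcongr)
  have e : t - (t₁ + t) / 2 = (t - t₁) / 2 := by ring
  rw [e] at h
  exact alg_hs hD hρ hDρ hnn h

/-! ### From the flow to the space-time formulation -/

section bridge

variable {n : ℕ} {G : SpT n → ℝ} {t : ℝ} {x : EuclideanSpace ℝ (Fin n)}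

theorem slice_x (h : DifferentiableAt ℝ G (t, x)) (i : Fin n) :
    fderiv ℝ (fun y => G (t, y)) x (EuclideanSpace.single i 1) = dv (ex i) G (t, x) := by
  have h1 : HasFDerivAt (fun y : EuclideanSpace ℝ (Fin n) => (t, y))
      (ContinuousLinearMap.inr ℝ ℝ (EuclideanSpace ℝ (Fin n))) x := hasFDerivAt_prodMk_right t x
  have h2 := HasFDerivAt.comp x h.hasFDerivAt h1
  have h3 : fderiv ℝ (fun y => G (t, y)) x
    = (fderiv ℝ G (t, x)).comp (ContinuousLinearMap.inr ℝ ℝ (EuclideanSpace ℝ (Fin n))) := h2.fderiv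
  rw [h3]
  simp [dv, ex]

theorem slice_t (h : DifferentiableAt ℝ G (t, x)) :
    deriv (fun s => G (s, x)) t = dv et G (t, x) := by
  have h1 : HasFDerivAt (fun s : ℝ => (s, x))
      (ContinuousLinearMap.inl ℝ ℝ (EuclideanSpace ℝ (Fin n))) t := hasFDerivAt_prodMk_left t x
  have h2 := HasFDerivAt.comp t h.hasFDerivAt h1
  have h3 : fderiv ℝ (fun s => G (s, x)) t
    = (fderiv ℝ G (t, x)).comp (ContinuousLinearMap.inl ℝ ℝ (EuclideanSpace ℝ (Fin n))) := h2.fderiv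
  rw [← fderiv_apply_one_eq_deriv, h3]
  simp [dv, et]

end bridge

section flow

variable {n : ℕ} {t₁ t₂ ρ a₁ : ℝ} {a₀ : EuclideanSpace ℝ (Fin n)}
  {f : ℝ → EuclideanSpace ℝ (Fin n) → ℝ} {t : ℝ} {x : EuclideanSpace ℝ (Fin n)}

/-- The shifted flow as a function on space-time. -/
def uf (f : ℝ → EuclideanSpace ℝ (Fin n) → ℝ) (a₁ : ℝ) (p : SpT n) : ℝ := f p.1 p.2 - a₁

theorem uf_open : IsOpen (Set.Ioo t₁ t₂ ×ˢ Metric.ball a₀ (2 * ρ) : Set (SpT n)) :=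
  isOpen_Ioo.prod Metric.isOpen_ball

theorem uf_sm (h : IsGMCF (Set.Ico t₁ t₂) (Metric.ball a₀ (2 * ρ)) f) :
    Sm (Set.Ioo t₁ t₂ ×ˢ Metric.ball a₀ (2 * ρ)) (uf f a₁) := by
  have h1 : Sm (Set.Ioo t₁ t₂ ×ˢ Metric.ball a₀ (2 * ρ)) (fun p : SpT n => f p.1 p.2) :=
    h.1.mono (Set.prod_mono Set.Ioo_subset_Ico_self subset_rfl)
  exact h1.sub (Sm.const a₁)

theorem pd_eq (h : IsGMCF (Set.Ico t₁ t₂) (Metric.ball a₀ (2 * ρ)) f)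
    (hp : (t, x) ∈ Set.Ioo t₁ t₂ ×ˢ Metric.ball a₀ (2 * ρ)) (i : Fin n) :
    pd (f t) x i = dv (ex i) (uf f a₁) (t, x) := by
  rw [← slice_x ((uf_sm h).diff uf_open hp) i]
  unfold pd uf
  rw [fderiv_sub_const]

theorem pd2_eq (h : IsGMCF (Set.Ico t₁ t₂) (Metric.ball a₀ (2 * ρ)) f)
    (hp : (t, x) ∈ Set.Ioo t₁ t₂ ×ˢ Metric.ball a₀ (2 * ρ)) (i j : Fin n) :
    pd2 (f t) x i j = dv (ex i) (dv (ex j) (uf f a₁)) (t, x) := by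
  rw [← slice_x (((uf_sm h).dv uf_open _).diff uf_open hp) i]
  unfold pd2
  have : (fun y => pd (f t) y j) =ᶠ[nhds x] fun y => dv (ex j) (uf f a₁) (t, y) := by
    filter_upwards [Metric.isOpen_ball.mem_nhds hp.2] with y hy
    exact pd_eq h (Set.mk_mem_prod hp.1 hy) j
  rw [this.fderiv_eq]

theorem gradNormSq_eq (h : IsGMCF (Set.Ico t₁ t₂) (Metric.ball a₀ (2 * ρ)) f)
    (hp : (t, x) ∈ Set.Ioo t₁ t₂ ×ˢ Metric.ball a₀ (2 * ρ)) :
    gradNormSq (f t) x = wf (uf f a₁) (t, x) := by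
  unfold gradNormSq wf
  refine Finset.sum_congr rfl fun i _ => ?_
  rw [pd_eq h hp i, sq]

theorem hess_eq (h : IsGMCF (Set.Ico t₁ t₂) (Metric.ball a₀ (2 * ρ)) f)
    (hp : (t, x) ∈ Set.Ioo t₁ t₂ ×ˢ Metric.ball a₀ (2 * ρ)) :
    ∑ i, ∑ j, (pd2 (f t) x i j) ^ 2 = Bf (uf f a₁) (t, x) := by
  unfold Bf
  refine Finset.sum_congr rfl fun i _ => Finset.sum_congr rfl fun j _ => ?_
  rw [pd2_eq h hp i j, sq]

theorem uf_sol (h : IsGMCF (Set.Ico t₁ t₂) (Metric.ball a₀ (2 * ρ)) f) :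
    Sol (Set.Ioo t₁ t₂ ×ˢ Metric.ball a₀ (2 * ρ)) (uf f a₁) := by
  refine ⟨uf_open, uf_sm h, ?_⟩
  rintro ⟨t, x⟩ hp
  rw [← slice_t ((uf_sm h).diff uf_open hp)]
  have h1 := h.2 t (Set.Ioo_subset_Ico_self hp.1) x hp.2
  have h2 : deriv (fun s => uf f a₁ (s, x)) t = deriv (fun s => f s x) t := by
    unfold uf
    rw [deriv_sub_const]
  rw [h2, h1]
  unfold mcfRHS
  refine Finset.sum_congr rfl fun i _ => Finset.sum_congr rfl fun j _ => ?_
  rw [pd2_eq h hp (a₁ := a₁), pd_eq h hp (a₁ := a₁), pd_eq h hp (a₁ := a₁),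
    gradNormSq_eq h hp (a₁ := a₁)]
  rfl

/-- Choice of a good positive time close to the initial time. -/
theorem good_time (h : IsGMCF (Set.Ico t₁ t₂) (Metric.ball a₀ (2 * ρ)) f) (ht : t₁ < t₂)
    (hρ : 0 < ρ) {A Λ δ : ℝ} (hδ : 0 < δ)
    (hA : ∀ x ∈ Metric.ball a₀ (2 * ρ), |f t₁ x - a₁| < A)
    (hΛ : ∀ x ∈ Metric.ball a₀ (2 * ρ), gradNormSq (f t₁) x < Λ) :
    ∃ s, t₁ < s ∧ s < t₂ ∧ s < t₁ + δ ∧ ∀ x ∈ Metric.closedBall a₀ (15 / 8 * ρ),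
      |f s x - a₁| < A ∧ gradNormSq (f s) x < Λ := by
  set D : Set (SpT n) := Set.Ico t₁ t₂ ×ˢ Metric.ball a₀ (2 * ρ) with hD
  set F : SpT n → ℝ := fun p => f p.1 p.2 with hF
  have hFs : ContDiffOn ℝ (⊤ : ℕ∞) F D := h.1
  have hud : UniqueDiffOn ℝ D := (uniqueDiffOn_Ico t₁ t₂).prod Metric.isOpen_ball.uniqueDiffOn
  have hFd : DifferentiableOn ℝ F D := hFs.differentiableOn (by simp)
  have hF' : ContinuousOn (fderivWithin ℝ F D) D := hFs.continuousOn_fderivWithin hud (by simp)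
  have hpd : ∀ p ∈ D, ∀ i, pd (f p.1) p.2 i = fderivWithin ℝ F D p (ex i) := by
    rintro ⟨t, x⟩ hp i
    have h1 : HasFDerivWithinAt (fun y : EuclideanSpace ℝ (Fin n) => (t, y))
      (ContinuousLinearMap.inr ℝ ℝ (EuclideanSpace ℝ (Fin n))) (Metric.ball a₀ (2 * ρ)) x :=
      (hasFDerivAt_prodMk_right t x).hasFDerivWithinAt
    have h2 := HasFDerivWithinAt.comp x (hFd (t, x) hp).hasFDerivWithinAt h1
      (fun y hy => ⟨hp.1, hy⟩)
    have h3 := h2.hasFDerivAt (Metric.isOpen_ball.mem_nhds hp.2)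
    have h4 : fderiv ℝ (f t) x = (fderivWithin ℝ F D (t, x)).comp
      (ContinuousLinearMap.inr ℝ ℝ (EuclideanSpace ℝ (Fin n))) := h3.fderiv
    simp only [pd]
    rw [h4]
    simp [ex]
  have hgc : ContinuousOn (fun p : SpT n => gradNormSq (f p.1) p.2) D := by
    have : ContinuousOn (fun p : SpT n => ∑ i, (fderivWithin ℝ F D p (ex i)) ^ 2) D :=
      continuousOn_finsetSum _ fun i _ => (hF'.clm_apply continuousOn_const).pow 2
    refine this.congr fun p hp => ?_
    unfold gradNormSq
    exact Finset.sum_congr rfl fun i _ => by rw [hpd p hp i]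
  have hfc : ContinuousOn (fun p : SpT n => |f p.1 p.2 - a₁|) D :=
    (hFs.continuousOn.sub continuousOn_const).abs
  have hev : ∀ᶠ t in nhds t₁, ∀ x ∈ Metric.closedBall a₀ (15 / 8 * ρ),
      ((t, x) ∈ D → |f t x - a₁| < A ∧ gradNormSq (f t) x < Λ) := by
    refine IsCompact.eventually_forall_of_forall_eventually (isCompact_closedBall _ _) ?_
    intro y hy
    have hyb : y ∈ Metric.ball a₀ (2 * ρ) := by
      simp only [Metric.mem_closedBall, Metric.mem_ball] at *
      linarith
    have hyD : (t₁, y) ∈ D := ⟨⟨le_refl _, ht⟩, hyb⟩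
    have e1 := (hfc (t₁, y) hyD).eventually (gt_mem_nhds (hA y hyb))
    have e2 := (hgc (t₁, y) hyD).eventually (gt_mem_nhds (hΛ y hyb))
    filter_upwards [eventually_nhdsWithin_iff.1 e1, eventually_nhdsWithin_iff.1 e2] with z z1 z2 z3
    exact ⟨z1 z3, z2 z3⟩
  have hev2 : ∀ᶠ t in nhdsWithin t₁ (Set.Ioi t₁), t ∈ Set.Ioo t₁ (min t₂ (t₁ + δ)) :=
    Ioo_mem_nhdsGT (lt_min ht (by linarith))
  obtain ⟨s, hs1, hs2⟩ := ((hev.filter_mono nhdsWithin_le_nhds).and hev2).exists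
  refine ⟨s, hs2.1, hs2.2.trans_le (min_le_left _ _), hs2.2.trans_le (min_le_right _ _), ?_⟩
  intro x hx
  refine hs1 x hx ⟨⟨hs2.1.le, hs2.2.trans_le (min_le_left _ _)⟩, ?_⟩
  simp only [Metric.mem_closedBall, Metric.mem_ball] at *
  linarith

end flow
set_option maxHeartbeats 1000000 in
/-- **Interior smoothing estimates** (graphical case `E = ∅` of Theorem `becominggraphthm`).
There are `C > 1`, `σ₀ ∈ (0,1)` (depending only on `n`) and, for every `L ≥ 1`, constants
`Λ₀ > 1`, `λ₀ ∈ (0,1)` such that: if `f` is a graphical mean curvature flow on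
`[t₁,t₂) × Bⁿ(â,2ρ)` with `|f − ã| < 2ρ`, `sup |f(t₁,·) − ã| ≤ λ^{2n}ρ` and
`sup |Df(t₁,·)| ≤ L` for some `λ ∈ (0,λ₀]`, then with `t₀ = t₁ + Λ₀λ²ρ²` (assumed `< t₂`)
one has for all `t ∈ [t₀, t₀+σ₀ρ²)` with `t < t₂` and all `x ∈ Bⁿ(â,ρ)`:
`|f(t,x) − ã| ≤ Cρ⁻¹(t−t₁)`, `|Df(t,x)| ≤ C(ρ⁻²(t−t₁))^{1/4}` and
`|D²f(t,x)| ≤ C(t−t₁)^{−1/2}`. -/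
theorem becominggraphthm (n : ℕ) (hn : 1 ≤ n) :
    ∃ C σ₀ : ℝ, 1 < C ∧ σ₀ ∈ Set.Ioo (0 : ℝ) 1 ∧
      ∀ L : ℝ, 1 ≤ L →
      ∃ Λ₀ lam₀ : ℝ, 1 < Λ₀ ∧ lam₀ ∈ Set.Ioo (0 : ℝ) 1 ∧
      ∀ lam ∈ Set.Ioc (0 : ℝ) lam₀, ∀ ρ : ℝ, 0 < ρ → ∀ t₁ t₂ : ℝ,
        t₁ + Λ₀ * lam ^ 2 * ρ ^ 2 < t₂ →
        ∀ (a₀ : EuclideanSpace ℝ (Fin n)) (a₁ : ℝ)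
          (f : ℝ → EuclideanSpace ℝ (Fin n) → ℝ),
          IsGMCF (Set.Ico t₁ t₂) (Metric.ball a₀ (2 * ρ)) f →
          (∀ t ∈ Set.Ico t₁ t₂, ∀ x ∈ Metric.ball a₀ (2 * ρ), |f t x - a₁| < 2 * ρ) →
          (∀ x ∈ Metric.ball a₀ (2 * ρ), |f t₁ x - a₁| ≤ lam ^ (2 * n) * ρ) →
          (∀ x ∈ Metric.ball a₀ (2 * ρ), gradNorm (f t₁) x ≤ L) →
          ∀ t : ℝ, t₁ + Λ₀ * lam ^ 2 * ρ ^ 2 ≤ t →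
            t < t₁ + Λ₀ * lam ^ 2 * ρ ^ 2 + σ₀ * ρ ^ 2 → t < t₂ →
          ∀ x ∈ Metric.ball a₀ ρ,
            |f t x - a₁| ≤ C * ρ⁻¹ * (t - t₁) ∧
            gradNorm (f t) x ≤ C * ((ρ ^ 2)⁻¹ * (t - t₁)) ^ ((1 : ℝ) / 4) ∧
            hessNorm (f t) x ≤ C * (t - t₁) ^ (-(1 : ℝ) / 2) := by
  have hCh := Chc_pos n
  have hC3 := C3c_pos n
  have hC2 := C2c_pos n
  have hs1 := s1c_pos n
  have hs1' := s1c_le n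
  have hmu := muc_pos hn
  have hK : Chc n + 17 * C2c n + C3c n ≤ (Chc n + 17 * C2c n + C3c n) ^ 2 :=
    le_self_pow₀ (by linarith) (by norm_num)
  have hK1 : 17 * C2c n ≤ (Chc n + 17 * C2c n + C3c n) ^ 2 := by linarith
  have hK2 : C3c n ≤ (Chc n + 17 * C2c n + C3c n) ^ 2 := by linarith
  obtain ⟨σ₂, hσ₂⟩ : ∃ σ₂, σ₂ = min (s1c n) (muc n / 128 / (17 * C2c n)) := ⟨_, rfl⟩
  have hσpos : 0 < σ₂ := by
    rw [hσ₂]; exact lt_min hs1 (by positivity)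
  have hσ1 : σ₂ ≤ s1c n := by rw [hσ₂]; exact min_le_left _ _
  have hσ2 : σ₂ ≤ muc n / 128 / (17 * C2c n) := by rw [hσ₂]; exact min_le_right _ _
  have hσ3 : 17 * C2c n * σ₂ ≤ muc n / 128 := by
    rw [le_div_iff₀ (by positivity)] at hσ2; linarith
  refine ⟨Chc n + 17 * C2c n + C3c n, σ₂ / 2, by linarith, ⟨by linarith, by linarith⟩, ?_⟩
  intro L hL
  obtain ⟨τ, hτ⟩ : ∃ τ, τ = min (s1c n) (1 / ((1 + 8 * (1 + (L ^ 2 + 1))) * C2c n)) := ⟨_, rfl⟩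
  have hτpos : 0 < τ := by
    rw [hτ]; exact lt_min hs1 (by positivity)
  have hτ1 : τ ≤ s1c n := by rw [hτ]; exact min_le_left _ _
  have hτ2 : (1 + 8 * (1 + (L ^ 2 + 1))) * C2c n * τ ≤ 1 := by
    have h : τ ≤ 1 / ((1 + 8 * (1 + (L ^ 2 + 1))) * C2c n) := by rw [hτ]; exact min_le_right _ _
    rw [le_div_iff₀ (by positivity)] at h; linarith
  refine ⟨8, min (1 / 2) (min (σ₂ / 16) (τ / 2)), by norm_num,
    ⟨lt_min (by norm_num) (lt_min (by linarith) (by linarith)),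
      lt_of_le_of_lt (min_le_left _ _) (by norm_num)⟩, ?_⟩
  intro lam hlam ρ hρ t₁ t₂ ht₂ a₀ a₁ f hf hb hi hg t ht0 ht1 htt x hx
  have hl0 := hlam.1
  have hl1 : lam ≤ 1 / 2 := hlam.2.trans (min_le_left _ _)
  have hl2 : lam ≤ σ₂ / 16 := hlam.2.trans ((min_le_right _ _).trans (min_le_left _ _))
  have hl3 : lam ≤ τ / 2 := hlam.2.trans ((min_le_right _ _).trans (min_le_right _ _))
  have hll : lam ^ 2 ≤ lam := by nlinarith
  have hlr : 0 < lam ^ 2 * ρ ^ 2 := by positivity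
  have ht12 : t₁ < t₂ := by nlinarith
  obtain ⟨s, hs, hs2, hsl, hS⟩ := good_time (A := 2 * lam ^ 2 * ρ) (Λ := L ^ 2 + 1)
    (δ := lam ^ 2 * ρ ^ 2) hf ht12 hρ hlr
    (fun y hy => by
      refine lt_of_le_of_lt (hi y hy) ?_
      have : lam ^ (2 * n) ≤ lam ^ 2 := pow_le_pow_of_le_one hl0.le (by linarith) (by omega)
      have h2 : lam ^ (2 * n) * ρ ≤ lam ^ 2 * ρ := mul_le_mul_of_nonneg_right this hρ.le
      have : 0 < lam ^ 2 * ρ := by positivity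
      linarith)
    (fun y hy => by
      have h1 := hg y hy
      unfold gradNorm at h1
      have h2 := (Real.sqrt_le_left (by linarith)).1 h1
      linarith)
  have hρ2 : 0 < ρ ^ 2 := by positivity
  have hD0 : 0 < t - t₁ := by nlinarith
  have hDσ : t - t₁ ≤ σ₂ * ρ ^ 2 := by nlinarith
  have htI : t ∈ Set.Ioo t₁ t₂ := ⟨by linarith, htt⟩
  have hx2 : x ∈ Metric.ball a₀ (2 * ρ) := Metric.ball_subset_ball (by linarith) hx
  have hcb : Metric.closedBall a₀ (15 / 8 * ρ) ⊆ Metric.ball a₀ (2 * ρ) :=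
    Metric.closedBall_subset_ball (by linarith)
  obtain ⟨hA, hB, hC⟩ := core hn (uf_sol (a₁ := a₁) hf) hρ hl0 (Λ := L ^ 2 + 1) (by positivity) hτpos hτ1 hτ2
    (by linarith) hs hs2 (by linarith)
    (fun t' ht' y hy => hb t' ⟨ht'.1.le, ht'.2⟩ y hy)
    (fun y hy => (hS y hy).1.le)
    (fun y hy => by
      rw [← gradNormSq_eq hf (Set.mk_mem_prod ⟨hs, hs2⟩ (hcb hy))]
      exact (hS y hy).2.le)
    t (by linarith) (hDσ.trans (by nlinarith)) (by nlinarith) htt x hx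
  rw [← gradNormSq_eq hf (Set.mk_mem_prod htI hx2)] at hB
  rw [← hess_eq hf (Set.mk_mem_prod htI hx2)] at hC
  refine ⟨?_, ?_, ?_⟩
  · have h1 : |f t x - a₁| ≤ Chc n * ((t - t₁) / ρ) := hA
    refine h1.trans ?_
    have h2 : (Chc n + 17 * C2c n + C3c n) * ρ⁻¹ * (t - t₁)
        = (Chc n + 17 * C2c n + C3c n) * ((t - t₁) / ρ) := by
      rw [div_eq_mul_inv]; ring
    rw [h2]
    exact mul_le_mul_of_nonneg_right (by linarith) (by positivity)
  · obtain ⟨d, hd⟩ : ∃ d, d = (ρ ^ 2)⁻¹ * (t - t₁) := ⟨_, rfl⟩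
    have hdd : (t - t₁) / ρ ^ 2 = d := by rw [hd, div_eq_mul_inv, mul_comm]
    rw [hdd] at hB
    rw [← hd]
    have hd0 : 0 < d := by rw [hd]; positivity
    have hd1 : d ≤ 1 := by
      rw [← hdd, div_le_one hρ2]; nlinarith
    unfold gradNorm
    have h4 : 0 < d ^ ((1 : ℝ) / 4) := Real.rpow_pos_of_pos hd0 _
    rw [Real.sqrt_le_left (by positivity)]
    have h5 : (d ^ ((1 : ℝ) / 4)) ^ 2 = d ^ ((1 : ℝ) / 2) := by
      rw [← Real.rpow_natCast, ← Real.rpow_mul hd0.le]; norm_num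
    have h6 : d ≤ d ^ ((1 : ℝ) / 2) := by
      conv_lhs => rw [← Real.rpow_one d]
      exact Real.rpow_le_rpow_of_exponent_ge hd0 hd1 (by norm_num)
    rw [mul_pow, h5]
    refine hB.trans ?_
    exact mul_le_mul hK1 h6 hd0.le (sq_nonneg _)
  · unfold hessNorm
    have h4 : 0 < (t - t₁) ^ (-(1 : ℝ) / 2) := Real.rpow_pos_of_pos hD0 _
    rw [Real.sqrt_le_left (by positivity)]
    have h5 : ((t - t₁) ^ (-(1 : ℝ) / 2)) ^ 2 = (t - t₁)⁻¹ := by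
      rw [← Real.rpow_natCast, ← Real.rpow_mul hD0.le, ← Real.rpow_neg_one]; norm_num
    rw [mul_pow, h5, ← div_eq_mul_inv, le_div_iff₀ hD0, mul_comm]
    exact hC.trans hK2
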